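/- arXiv:2009.08848 — 12 statements merged into one kernel-verified Lean document; each statement's English description precedes it below -/
import Mathlib

section
/- Let β : ℕ₀ → [0,1] be nonincreasing with β(0) = 1 and suppose Σ_{k=0}^∞ k^{α−1}·β(k) < ∞ for some α > 1. Then φ(x) := x^{α/(α−1)} satisfies the compatibility conditions (φ(0)=0; φ convex and differentiable with c₀ := sup_{y>0} φ'(y)y/φ(y) < ∞; y ↦ y/φ(y) convex and decreasing on (0,∞); Σ_{k=0}^∞ (φ*(k+1)−φ*(k))·β(k) < ∞), and the associated rate function satisfies Λ^mix(x) ≤ c_α·(x^{α/(α+1)} ∨ x) for all x > 0, where c_α > 0 depends only on α. -/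
/-!
With `p = α / (α - 1)`, the substitution `x = t * y ^ (α - 1)` turns `x * y - x ^ p` into
`y ^ α * (t - t ^ p)`, because `(α - 1) * p = α`. Hence `φ* y = K * y ^ α` for `y > 0`, where
`K = φ* 1` (`phiConj_rpow`), and `K > 0` because `t - t ^ p > 0` at `t = 1 / 2`.
The exact value of `K` plays no role.

Summability then follows from `(k + 1) ^ α - k ^ α ≤ α * 2 ^ (α - 1) * k ^ (α - 1)` for `k ≥ 1`,
a consequence of Bernoulli's inequality. For the rate, `ψ x = K * x ^ (α + 1)` gives
`ψ⁻¹ (x⁻¹) ≤ (K⁻¹ * x⁻¹) ^ (1 / (α + 1))`; rounding up adds at most `1`, and multiplying by `x`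
yields a multiple of `x ^ (α / (α + 1))` plus `x`.
-/

/-- Convex conjugate `φ*(y) = sup_{x>0} (x·y − φ x)`. -/
noncomputable def phiConj (φ : ℝ → ℝ) (y : ℝ) : ℝ :=
  sSup {z : ℝ | ∃ x > 0, z = x * y - φ x}

/-- `ψ(x) = φ*(x)·x`. -/
noncomputable def psiOf (φ : ℝ → ℝ) (x : ℝ) : ℝ := phiConj φ x * x

/-- Generalised inverse `ψ⁻¹(y) = sup{x ≥ 0 : ψ x ≤ y}`. -/
noncomputable def psiInv (φ : ℝ → ℝ) (y : ℝ) : ℝ :=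
  sSup {x : ℝ | 0 ≤ x ∧ psiOf φ x ≤ y}

/-- The mixing rate function `Λ^mix(x) = ⌈ψ⁻¹(x⁻¹)⌉·x`. -/
noncomputable def lambdaMix (φ : ℝ → ℝ) (x : ℝ) : ℝ :=
  (⌈psiInv φ x⁻¹⌉₊ : ℝ) * x

theorem convexOn_rpow_of_nonpos {r : ℝ} (hr : r ≤ 0) :
    ConvexOn ℝ (Set.Ioi (0 : ℝ)) (fun x : ℝ => x ^ r) := by
  refine ⟨convex_Ioi 0, fun x hx y hy a b ha hb hab => ?_⟩
  have hz : 0 < a • x + b • y := convex_Ioi (0 : ℝ) hx hy ha hb hab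
  have hlog := strictConcaveOn_log_Ioi.concaveOn.2 hx hy ha hb hab
  have hexp := convexOn_exp.2 (Set.mem_univ (Real.log x * r)) (Set.mem_univ (Real.log y * r))
    ha hb hab
  simp only [smul_eq_mul] at *
  rw [Real.rpow_def_of_pos hz, Real.rpow_def_of_pos hx, Real.rpow_def_of_pos hy]
  refine le_trans (Real.exp_le_exp.2 ?_) hexp
  nlinarith [mul_le_mul_of_nonpos_right hlog hr]

theorem bddAbove_sub_rpow {p : ℝ} (hp : 1 < p) :
    BddAbove {z : ℝ | ∃ x > 0, z = x * 1 - x ^ p} := by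
  refine ⟨1, ?_⟩
  rintro z ⟨x, hx, rfl⟩
  rcases le_total x 1 with h | h
  · have := Real.rpow_nonneg hx.le p
    linarith
  · have := Real.self_le_rpow_of_one_le h hp.le
    linarith

theorem phiConj_one_pos {p : ℝ} (hp : 1 < p) : 0 < phiConj (fun x : ℝ => x ^ p) 1 := by
  have h : (1 / 2 : ℝ) ^ p < 1 / 2 :=
    Real.rpow_lt_self_of_lt_one (by norm_num) (by norm_num) hp
  have hle : (1 / 2 : ℝ) * 1 - (1 / 2 : ℝ) ^ p ≤ phiConj (fun x : ℝ => x ^ p) 1 :=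
    le_csSup (bddAbove_sub_rpow hp) ⟨1 / 2, by norm_num, rfl⟩
  linarith

open scoped Pointwise in
/-- Homogeneity of the conjugate of a power, by the substitution `x = t * y ^ (α - 1)`. -/
theorem phiConj_rpow {α : ℝ} (hα : 1 < α) {y : ℝ} (hy : 0 < y) :
    phiConj (fun x : ℝ => x ^ (α / (α - 1))) y =
      phiConj (fun x : ℝ => x ^ (α / (α - 1))) 1 * y ^ α := by
  have hα1 : α - 1 ≠ 0 := by linarith
  have hs : 0 < y ^ (α - 1) := Real.rpow_pos_of_pos hy _
  have hsy : y ^ (α - 1) * y = y ^ α := by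
    rw [← Real.rpow_add_one hy.ne']
    congr 1
    ring
  have hsp : (y ^ (α - 1)) ^ (α / (α - 1)) = y ^ α := by
    rw [← Real.rpow_mul hy.le]
    congr 1
    field_simp
  have hkey : ∀ t : ℝ, 0 < t → t * y ^ (α - 1) * y - (t * y ^ (α - 1)) ^ (α / (α - 1)) =
      y ^ α * (t * 1 - t ^ (α / (α - 1))) := by
    intro t ht
    rw [Real.mul_rpow ht.le hs.le, hsp, mul_assoc, hsy]
    ring
  have hset : {z : ℝ | ∃ x > 0, z = x * y - x ^ (α / (α - 1))} =
      y ^ α • {z : ℝ | ∃ x > 0, z = x * 1 - x ^ (α / (α - 1))} := by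
    ext z
    rw [Set.mem_smul_set]
    constructor
    · rintro ⟨x, hx, rfl⟩
      refine ⟨_, ⟨x / y ^ (α - 1), div_pos hx hs, rfl⟩, ?_⟩
      rw [smul_eq_mul, ← hkey _ (div_pos hx hs), div_mul_cancel₀ _ hs.ne']
    · rintro ⟨_, ⟨t, ht, rfl⟩, rfl⟩
      exact ⟨t * y ^ (α - 1), mul_pos ht hs, by rw [smul_eq_mul, hkey t ht]⟩
  unfold phiConj
  rw [hset, Real.sSup_smul_of_nonneg (Real.rpow_nonneg hy.le _), smul_eq_mul, mul_comm]

theorem rpow_add_one_sub_le {α : ℝ} (hα : 1 < α) {x : ℝ} (hx : 1 ≤ x) :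
    (x + 1) ^ α - x ^ α ≤ α * 2 ^ (α - 1) * x ^ (α - 1) := by
  have hx0 : 0 < x + 1 := by linarith
  -- Bernoulli at `-1 / (x + 1)` bounds `(x / (x + 1)) ^ α` from below.
  have hb := one_add_mul_self_le_rpow_one_add (s := -1 / (x + 1))
    (by rw [le_div_iff₀ hx0]; linarith) hα.le
  have he : 1 + -1 / (x + 1) = x / (x + 1) := by
    field_simp
    ring
  rw [he, Real.div_rpow (by linarith) hx0.le, le_div_iff₀ (Real.rpow_pos_of_pos hx0 _)] at hb
  have h1 : (x + 1) ^ α = (x + 1) ^ (α - 1) * (x + 1) := by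
    rw [← Real.rpow_add_one hx0.ne']
    congr 1
    ring
  have h2 : (1 + α * (-1 / (x + 1))) * (x + 1) ^ α = (x + 1) ^ α - α * (x + 1) ^ (α - 1) := by
    rw [h1]
    field_simp
    ring
  have h3 : (x + 1) ^ (α - 1) ≤ 2 ^ (α - 1) * x ^ (α - 1) := by
    rw [← Real.mul_rpow (by norm_num) (by linarith)]
    exact Real.rpow_le_rpow hx0.le (by linarith) (by linarith)
  rw [h2] at hb
  nlinarith [mul_le_mul_of_nonneg_left h3 (by linarith : (0 : ℝ) ≤ α)]

theorem psiInv_rpow_le {α : ℝ} (hα : 1 < α) {y : ℝ} (hy : 0 ≤ y) :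
    psiInv (fun x : ℝ => x ^ (α / (α - 1))) y ≤
      ((phiConj (fun x : ℝ => x ^ (α / (α - 1))) 1)⁻¹ * y) ^ (α + 1)⁻¹ := by
  have hp : 1 < α / (α - 1) := by
    rw [lt_div_iff₀ (by linarith)]
    linarith
  have hK := phiConj_one_pos hp
  refine Real.sSup_le ?_ (by positivity)
  rintro x ⟨hx, hxy⟩
  rcases hx.eq_or_lt with rfl | hx0
  · positivity
  · rw [Real.le_rpow_inv_iff_of_pos hx (by positivity) (by linarith),
      le_inv_mul_iff₀ hK, Real.rpow_add_one hx0.ne', ← mul_assoc, ← phiConj_rpow hα hx0]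
    exact hxy

/-- **Polynomially decaying mixing coefficients: compatibility and rate.**
Let `α > 1` and `φ(x) = x^{α/(α−1)}`.  Then (a) `φ` satisfies the compatibility
conditions: `φ 0 = 0`; `φ` is convex and differentiable on `(0,∞)` with
`c₀ = sup_y φ'(y)·y/φ(y) < ∞`; `y ↦ y/φ(y)` is convex and decreasing on `(0,∞)`;
and for every nonincreasing `β : ℕ → [0,1]` with `β 0 = 1` and
`∑ k^{α−1}·β k < ∞` one has `∑ (φ*(k+1) − φ*(k))·β k < ∞`.
(b) There is `c_α > 0` depending only on `α` with
`Λ^mix(x) ≤ c_α·(x^{α/(α+1)} ⊔ x)` for all `x > 0`. -/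
theorem mixing_polynomial_compatibility_and_rate (α : ℝ) (hα : 1 < α) :
    ((fun x : ℝ => x ^ (α / (α - 1))) 0 = 0 ∧
      ConvexOn ℝ (Set.Ici (0 : ℝ)) (fun x : ℝ => x ^ (α / (α - 1))) ∧
      DifferentiableOn ℝ (fun x : ℝ => x ^ (α / (α - 1))) (Set.Ioi (0 : ℝ)) ∧
      (∃ c₀ : ℝ, ∀ y : ℝ, 0 < y →
        deriv (fun x : ℝ => x ^ (α / (α - 1))) y * y ≤ c₀ * y ^ (α / (α - 1))) ∧
      ConvexOn ℝ (Set.Ioi (0 : ℝ)) (fun y : ℝ => y / y ^ (α / (α - 1))) ∧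
      AntitoneOn (fun y : ℝ => y / y ^ (α / (α - 1))) (Set.Ioi (0 : ℝ)) ∧
      (∀ β : ℕ → ℝ, Antitone β → (∀ k, β k ∈ Set.Icc (0 : ℝ) 1) → β 0 = 1 →
        Summable (fun k : ℕ => (k : ℝ) ^ (α - 1) * β k) →
        Summable (fun k : ℕ =>
          (phiConj (fun x : ℝ => x ^ (α / (α - 1))) ((k : ℝ) + 1) -
            phiConj (fun x : ℝ => x ^ (α / (α - 1))) (k : ℝ)) * β k))) ∧
    ∃ c : ℝ, 0 < c ∧ ∀ x : ℝ, 0 < x →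
      lambdaMix (fun x : ℝ => x ^ (α / (α - 1))) x ≤
        c * max (x ^ (α / (α + 1))) x := by
  have hα1 : 0 < α - 1 := by linarith
  have hp : 1 < α / (α - 1) := by
    rw [lt_div_iff₀ hα1]
    linarith
  have hK := phiConj_one_pos hp
  have hdiv : Set.EqOn (fun y : ℝ => y ^ (1 - α / (α - 1)))
      (fun y : ℝ => y / y ^ (α / (α - 1))) (Set.Ioi 0) := fun y hy => by
    simp only [Real.rpow_sub hy, Real.rpow_one]
  refine ⟨⟨?_, convexOn_rpow hp.le, ?_, ⟨α / (α - 1), ?_⟩, ?_, ?_, ?_⟩, ?_⟩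
  · exact Real.zero_rpow (by linarith)
  · exact fun y _ => (Real.differentiableAt_rpow_const_of_ne _
      (ne_of_gt ‹_›)).differentiableWithinAt
  · intro y hy
    rw [Real.deriv_rpow_const, mul_assoc, ← Real.rpow_add_one hy.ne', sub_add_cancel]
  · exact (convexOn_rpow_of_nonpos (by linarith)).congr hdiv
  · exact (Real.antitoneOn_rpow_Ioi_of_exponent_nonpos (by linarith)).congr hdiv
  · intro β _ hβ _ hsum
    -- Dropping `k = 0` leaves only positive arguments of the conjugate.
    rw [← summable_nat_add_iff 1] at hsum ⊢
    refine Summable.of_nonneg_of_le (fun k => ?_) (fun k => ?_)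
      (hsum.mul_left (phiConj (fun x : ℝ => x ^ (α / (α - 1))) 1 * (α * 2 ^ (α - 1))))
    all_goals
      have hk : (1 : ℝ) ≤ ((k + 1 : ℕ) : ℝ) := by exact_mod_cast Nat.le_add_left 1 k
      rw [phiConj_rpow hα (by linarith : (0 : ℝ) < ((k + 1 : ℕ) : ℝ) + 1),
        phiConj_rpow hα (by linarith : (0 : ℝ) < ((k + 1 : ℕ) : ℝ)), ← mul_sub]
    · refine mul_nonneg (mul_nonneg hK.le (sub_nonneg.2 ?_)) (hβ _).1
      exact Real.rpow_le_rpow (by linarith) (by linarith) (by linarith)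
    · have h := mul_le_mul_of_nonneg_left
        (mul_le_mul_of_nonneg_right (rpow_add_one_sub_le hα hk) (hβ (k + 1)).1) hK.le
      simpa only [mul_assoc] using h
  · refine ⟨(phiConj (fun x : ℝ => x ^ (α / (α - 1))) 1)⁻¹ ^ (α + 1)⁻¹ + 1, by positivity, ?_⟩
    intro x hx
    have hψ := psiInv_rpow_le hα (inv_nonneg.2 hx.le)
    set K := phiConj (fun x : ℝ => x ^ (α / (α - 1))) 1
    have hx' : (x⁻¹) ^ (α + 1)⁻¹ * x = x ^ (α / (α + 1)) := by
      rw [Real.inv_rpow hx.le, ← Real.rpow_neg hx.le, ← Real.rpow_add_one hx.ne']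
      congr 1
      field_simp
      ring
    have hceil : (⌈psiInv (fun x : ℝ => x ^ (α / (α - 1))) x⁻¹⌉₊ : ℝ) ≤
        (K⁻¹ * x⁻¹) ^ (α + 1)⁻¹ + 1 :=
      (Nat.cast_le.2 (Nat.ceil_mono hψ)).trans (Nat.ceil_lt_add_one (by positivity)).le
    calc lambdaMix (fun x : ℝ => x ^ (α / (α - 1))) x
        ≤ ((K⁻¹ * x⁻¹) ^ (α + 1)⁻¹ + 1) * x := mul_le_mul_of_nonneg_right hceil hx.le
      _ = K⁻¹ ^ (α + 1)⁻¹ * x ^ (α / (α + 1)) + x := by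
          rw [Real.mul_rpow (by positivity) (by positivity), ← hx']
          ring
      _ ≤ (K⁻¹ ^ (α + 1)⁻¹ + 1) * max (x ^ (α / (α + 1))) x := by
          rw [add_mul, one_mul]
          exact add_le_add (mul_le_mul_of_nonneg_left (le_max_left _ _) (by positivity))
            (le_max_right _ _)
end

section
/- Let β : ℕ₀ → [0,1] be nonincreasing with β(0) = 1 and suppose β(k) ≤ κ·ρ^k for some κ > 0 and ρ ∈ (0,1). Then with a := (ρ+1)/(2ρ), the function φ(x) := x·log(x+1)/log(a) satisfies the compatibility conditions (φ(0)=0; φ convex and differentiable with c₀ := sup_{y>0} φ'(y)y/φ(y) < ∞; y ↦ y/φ(y) convex and decreasing on (0,∞); Σ_{k=0}^∞ (φ*(k+1)−φ*(k))·β(k) < ∞), and the associated rate function satisfies Λ^mix(x) ≤ c_ρ·(1 ∨ log(x^{−1}))·x for all x > 0, where c_ρ > 0 depends only on ρ. -/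
/-- The function `φ` of the theorem, with `L` in place of `log a`. -/
noncomputable def phiL (L : ℝ) : ℝ → ℝ := fun x => x * Real.log (x + 1) / L

lemma hasDerivAt_phiL (L : ℝ) {y : ℝ} (hy : -1 < y) :
    HasDerivAt (phiL L) ((Real.log (y + 1) + y / (y + 1)) / L) y := by
  have h1 : HasDerivAt (fun x : ℝ => x + 1) 1 y := (hasDerivAt_id y).add_const 1
  have h2 := ((hasDerivAt_id y).mul (h1.log (by linarith))).div_const L
  have h3 : (1 * Real.log (y + 1) + id y * (1 / (y + 1))) / L
      = (Real.log (y + 1) + y / (y + 1)) / L := by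
    simp only [id]; ring
  rw [← h3]
  exact h2

lemma convexOn_phiL {L : ℝ} (hL : 0 < L) : ConvexOn ℝ (Set.Ici (0 : ℝ)) (phiL L) := by
  apply MonotoneOn.convexOn_of_deriv (convex_Ici 0)
  · intro x hx
    have hx' : (0 : ℝ) ≤ x := hx
    exact (hasDerivAt_phiL L (by linarith)).continuousAt.continuousWithinAt
  · intro x hx
    rw [interior_Ici] at hx
    have hx' : (0 : ℝ) < x := hx
    exact (hasDerivAt_phiL L (by linarith)).differentiableAt.differentiableWithinAt
  · rw [interior_Ici]
    intro x hx y hy hxy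
    have hx' : (0 : ℝ) < x := hx
    have hy' : (0 : ℝ) < y := hy
    rw [(hasDerivAt_phiL L (by linarith)).deriv, (hasDerivAt_phiL L (by linarith)).deriv]
    have h1 : Real.log (x + 1) ≤ Real.log (y + 1) :=
      Real.log_le_log (by linarith) (by linarith)
    have h2 : x / (x + 1) ≤ y / (y + 1) := by
      rw [div_le_div_iff₀ (by linarith) (by linarith)]
      nlinarith
    gcongr

lemma deriv_phiL_mul_le {L : ℝ} (hL : 0 < L) {y : ℝ} (hy : 0 < y) :
    deriv (phiL L) y * y ≤ 2 * (y * Real.log (y + 1) / L) := by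
  rw [(hasDerivAt_phiL L (by linarith)).deriv]
  have h1 : y / (y + 1) ≤ Real.log (y + 1) := by
    have := Real.one_sub_inv_le_log_of_pos (show 0 < y + 1 by linarith)
    have e : y / (y + 1) = 1 - (y + 1)⁻¹ := by field_simp; ring
    rw [e]; exact this
  have e : 2 * (y * Real.log (y + 1) / L) = (Real.log (y + 1) + Real.log (y + 1)) / L * y := by
    ring
  rw [e]
  gcongr

lemma div_phiL {L y : ℝ} (hy : 0 < y) :
    y / (y * Real.log (y + 1) / L) = L * (Real.log (y + 1))⁻¹ := by
  rw [div_div_eq_mul_div, mul_div_mul_left _ _ hy.ne', div_eq_mul_inv]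

lemma antitoneOn_div_phiL {L : ℝ} (hL : 0 < L) :
    AntitoneOn (fun y : ℝ => y / (y * Real.log (y + 1) / L)) (Set.Ioi 0) := by
  intro x hx y hy hxy
  have hx' : (0 : ℝ) < x := hx
  have hy' : (0 : ℝ) < y := hy
  simp only [div_phiL hx', div_phiL hy']
  have h0 : 0 < Real.log (x + 1) := Real.log_pos (by linarith)
  have h1 : Real.log (x + 1) ≤ Real.log (y + 1) := Real.log_le_log (by linarith) (by linarith)
  gcongr

lemma convexOn_div_phiL {L : ℝ} (hL : 0 < L) :
    ConvexOn ℝ (Set.Ioi 0) (fun y : ℝ => y / (y * Real.log (y + 1) / L)) := by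
  refine ⟨convex_Ioi 0, ?_⟩
  intro x hx y hy s t hs ht hst
  have hx' : (0 : ℝ) < x := hx
  have hy' : (0 : ℝ) < y := hy
  have hz : (0 : ℝ) < s • x + t • y := (convex_Ioi (0 : ℝ)) hx hy hs ht hst
  simp only [div_phiL hx', div_phiL hy', div_phiL hz]
  simp only [smul_eq_mul] at hz ⊢
  have hp : 0 < Real.log (x + 1) := Real.log_pos (by linarith)
  have hq : 0 < Real.log (y + 1) := Real.log_pos (by linarith)
  have hconc : s * Real.log (x + 1) + t * Real.log (y + 1) ≤ Real.log (s * x + t * y + 1) := by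
    have h := strictConcaveOn_log_Ioi.concaveOn.2
      (show x + 1 ∈ Set.Ioi (0 : ℝ) from by simp only [Set.mem_Ioi]; linarith)
      (show y + 1 ∈ Set.Ioi (0 : ℝ) from by simp only [Set.mem_Ioi]; linarith) hs ht hst
    simp only [smul_eq_mul] at h
    rwa [show s * (x + 1) + t * (y + 1) = s * x + t * y + 1 by linear_combination hst] at h
  have hpos : 0 < s * Real.log (x + 1) + t * Real.log (y + 1) :=
    (convex_Ioi (0 : ℝ)) (show Real.log (x + 1) ∈ Set.Ioi (0 : ℝ) from hp) hq hs ht hst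
  have hinv : (s * Real.log (x + 1) + t * Real.log (y + 1))⁻¹
      ≤ s * (Real.log (x + 1))⁻¹ + t * (Real.log (y + 1))⁻¹ := by
    have h := (convexOn_zpow (𝕜 := ℝ) (-1)).2 (show Real.log (x + 1) ∈ Set.Ioi (0 : ℝ) from hp)
      (show Real.log (y + 1) ∈ Set.Ioi (0 : ℝ) from hq) hs ht hst
    simpa only [smul_eq_mul, zpow_neg_one] using h
  calc L * (Real.log (s * x + t * y + 1))⁻¹
      ≤ L * (s * Real.log (x + 1) + t * Real.log (y + 1))⁻¹ := by gcongr
    _ ≤ L * (s * (Real.log (x + 1))⁻¹ + t * (Real.log (y + 1))⁻¹) := by gcongr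
    _ = _ := by ring

lemma term_le {L : ℝ} (hL : 0 < L) {x y : ℝ} (hx : 0 < x) (hy : 0 ≤ y) :
    x * y - phiL L x ≤ y * Real.exp (L * y) := by
  have hlog : 0 < Real.log (x + 1) := Real.log_pos (by linarith)
  unfold phiL
  rcases le_total x (Real.exp (L * y)) with h | h
  · have h1 : 0 ≤ x * Real.log (x + 1) / L := by positivity
    nlinarith [mul_le_mul_of_nonneg_left h hy]
  · have h1 : L * y ≤ Real.log (x + 1) := by
      rw [Real.le_log_iff_exp_le (by linarith)]
      linarith
    have h2 : x * y ≤ x * Real.log (x + 1) / L := by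
      rw [le_div_iff₀ hL]
      nlinarith
    have h3 : 0 ≤ y * Real.exp (L * y) := by positivity
    linarith

lemma le_phiConj {L : ℝ} (hL : 0 < L) {x y : ℝ} (hx : 0 < x) (hy : 0 ≤ y) :
    x * y - phiL L x ≤ phiConj (phiL L) y := by
  refine le_csSup ⟨y * Real.exp (L * y), ?_⟩ ⟨x, hx, rfl⟩
  rintro z ⟨w, hw, rfl⟩
  exact term_le hL hw hy

lemma phiConj_le {L : ℝ} (hL : 0 < L) {y : ℝ} (hy : 0 ≤ y) :
    phiConj (phiL L) y ≤ y * Real.exp (L * y) := by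
  refine csSup_le ⟨_, 1, one_pos, rfl⟩ ?_
  rintro z ⟨w, hw, rfl⟩
  exact term_le hL hw hy

lemma phiConj_mono {L : ℝ} (hL : 0 < L) {y z : ℝ} (hy : 0 ≤ y) (hyz : y ≤ z) :
    phiConj (phiL L) y ≤ phiConj (phiL L) z := by
  refine csSup_le ⟨_, 1, one_pos, rfl⟩ ?_
  rintro v ⟨w, hw, rfl⟩
  refine le_trans ?_ (le_phiConj hL hw (hy.trans hyz))
  gcongr

/-- Exponential growth of `ψ` makes its generalised inverse at most logarithmic. -/
lemma psiInv_le {L : ℝ} (hL : 0 < L) {y : ℝ} (hy : 0 < y) :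
    psiInv (phiL L) y ≤ (2 + 2 / L) * max 1 (Real.log y) := by
  set M := max 1 (Real.log y) with hM
  have hM1 : 1 ≤ M := le_max_left _ _
  have hMl : Real.log y ≤ M := le_max_right _ _
  have hyM : y ≤ Real.exp M := (Real.log_le_iff_le_exp hy).1 hMl
  refine Real.sSup_le ?_ (by positivity)
  rintro t ⟨ht0, ht⟩
  have hd : 0 ≤ 2 / L * M := by positivity
  rcases le_total t 2 with h2 | h2
  · linarith
  -- The test point at which `log (x + 1) / L` is half of `t`.
  have hs : 0 < Real.exp (L * t / 2) - 1 := by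
    have : 0 < L * t / 2 := by nlinarith
    linarith [Real.add_one_lt_exp this.ne']
  have h := le_phiConj hL hs ht0
  have e : phiL L (Real.exp (L * t / 2) - 1) = (Real.exp (L * t / 2) - 1) * (t / 2) := by
    unfold phiL
    rw [sub_add_cancel, Real.log_exp]
    field_simp
  rw [e] at h
  unfold psiOf at ht
  have h3 : Real.exp (L * t / 2) - 1 ≤ phiConj (phiL L) t := by nlinarith
  have h4 : (Real.exp (L * t / 2) - 1) * 2 ≤ y := by nlinarith
  have h5 : 2 ≤ Real.exp M := by linarith [Real.add_one_le_exp M]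
  have h6 : Real.exp (L * t / 2) ≤ Real.exp M := by linarith
  have h7 : L * t / 2 ≤ M := Real.exp_le_exp.1 h6
  have h8 : t ≤ 2 / L * M := by
    rw [div_mul_eq_mul_div, le_div_iff₀ hL]
    linarith
  linarith

lemma lambdaMix_le {L : ℝ} (hL : 0 < L) {x : ℝ} (hx : 0 < x) :
    lambdaMix (phiL L) x ≤ (3 + 2 / L) * (max 1 (Real.log x⁻¹) * x) := by
  have hM1 : 1 ≤ max 1 (Real.log x⁻¹) := le_max_left _ _
  have h := psiInv_le hL (inv_pos.2 hx)
  have h0 : 0 ≤ psiInv (phiL L) x⁻¹ := Real.sSup_nonneg fun t ht => ht.1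
  have h1 := (Nat.ceil_lt_add_one h0).le
  unfold lambdaMix
  rw [← mul_assoc]
  gcongr
  linarith

lemma summable_phiConj {ρ κ L : ℝ} (hρ₀ : 0 < ρ) (hρ₁ : ρ < 1) (hL : 0 < L)
    (hexp : Real.exp L = (ρ + 1) / (2 * ρ)) {β : ℕ → ℝ} (hβ0 : ∀ k, 0 ≤ β k)
    (hβ : ∀ k, β k ≤ κ * ρ ^ k) :
    Summable fun k : ℕ => (phiConj (phiL L) ((k : ℝ) + 1) - phiConj (phiL L) (k : ℝ)) * β k := by
  have hlog2 : 0 < Real.log 2 := Real.log_pos one_lt_two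
  set r : ℝ := (ρ + 1) / 2 with hr
  have hr1 : ‖r‖ < 1 := by
    rw [Real.norm_of_nonneg (by positivity)]; linarith
  have hρn : ‖ρ‖ < 1 := by rwa [Real.norm_of_nonneg hρ₀.le]
  have s1 : Summable fun k : ℕ => ((k : ℝ) ^ 1 * r ^ k) :=
    summable_pow_mul_geometric_of_norm_lt_one 1 hr1
  have s2 : Summable fun k : ℕ => r ^ k := summable_geometric_of_norm_lt_one hr1
  have s3 : Summable fun k : ℕ => ρ ^ k := summable_geometric_of_norm_lt_one hρn
  have hs : Summable fun k : ℕ => κ * Real.exp L * ((k : ℝ) ^ 1 * r ^ k + r ^ k)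
      + κ * (Real.log 2 / L) * ρ ^ k :=
    ((s1.add s2).mul_left _).add (s3.mul_left _)
  refine Summable.of_nonneg_of_le (fun k => ?_) (fun k => ?_) hs
  · exact mul_nonneg (sub_nonneg.2 (phiConj_mono hL k.cast_nonneg (by linarith))) (hβ0 k)
  · have hk : (0 : ℝ) ≤ k := k.cast_nonneg
    have u := phiConj_le hL (show (0 : ℝ) ≤ (k : ℝ) + 1 by linarith)
    have l := le_phiConj hL one_pos hk
    have e1 : phiL L 1 = Real.log 2 / L := by unfold phiL; norm_num
    rw [e1] at l
    have e2 : Real.exp (L * ((k : ℝ) + 1)) = Real.exp L ^ k * Real.exp L := by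
      rw [mul_add, mul_one, Real.exp_add, mul_comm L, Real.exp_nat_mul]
    have e3 : Real.exp L ^ k * ρ ^ k = r ^ k := by
      rw [← mul_pow, hexp]
      congr 1
      rw [hr]; field_simp
    have hb : 0 ≤ ((k : ℝ) + 1) * Real.exp (L * ((k : ℝ) + 1)) + Real.log 2 / L := by positivity
    calc (phiConj (phiL L) ((k : ℝ) + 1) - phiConj (phiL L) (k : ℝ)) * β k
        ≤ (((k : ℝ) + 1) * Real.exp (L * ((k : ℝ) + 1)) + Real.log 2 / L) * β k :=
          mul_le_mul_of_nonneg_right (by linarith) (hβ0 k)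
      _ ≤ (((k : ℝ) + 1) * Real.exp (L * ((k : ℝ) + 1)) + Real.log 2 / L) * (κ * ρ ^ k) :=
          mul_le_mul_of_nonneg_left (hβ k) hb
      _ = _ := by rw [e2, ← e3]; ring

/-- **Geometrically decaying mixing coefficients: compatibility and rate.**
Let `β : ℕ → [0,1]` be nonincreasing with `β 0 = 1` and `β k ≤ κ·ρ^k` for some
`κ > 0`, `ρ ∈ (0,1)`.  With `a = (ρ+1)/(2ρ)` and `φ(x) = x·log(x+1)/log a`:
(a) `φ` satisfies the compatibility conditions (`φ 0 = 0`; convex, differentiable,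
`c₀ < ∞`; `y ↦ y/φ(y)` convex and decreasing on `(0,∞)`;
`∑ (φ*(k+1) − φ*(k))·β k < ∞`); and
(b) there is `c_ρ > 0` depending only on `ρ` with
`Λ^mix(x) ≤ c_ρ·(1 ⊔ log(x⁻¹))·x` for all `x > 0`. -/
theorem mixing_geometric_compatibility_and_rate
    (κ ρ : ℝ) (hκ : 0 < κ) (hρ₀ : 0 < ρ) (hρ₁ : ρ < 1) :
    ((fun x : ℝ => x * Real.log (x + 1) / Real.log ((ρ + 1) / (2 * ρ))) 0 = 0 ∧
      ConvexOn ℝ (Set.Ici (0 : ℝ))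
        (fun x : ℝ => x * Real.log (x + 1) / Real.log ((ρ + 1) / (2 * ρ))) ∧
      DifferentiableOn ℝ
        (fun x : ℝ => x * Real.log (x + 1) / Real.log ((ρ + 1) / (2 * ρ)))
        (Set.Ioi (0 : ℝ)) ∧
      (∃ c₀ : ℝ, ∀ y : ℝ, 0 < y →
        deriv (fun x : ℝ => x * Real.log (x + 1) / Real.log ((ρ + 1) / (2 * ρ))) y * y
          ≤ c₀ * (y * Real.log (y + 1) / Real.log ((ρ + 1) / (2 * ρ)))) ∧
      ConvexOn ℝ (Set.Ioi (0 : ℝ))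
        (fun y : ℝ => y / (y * Real.log (y + 1) / Real.log ((ρ + 1) / (2 * ρ)))) ∧
      AntitoneOn
        (fun y : ℝ => y / (y * Real.log (y + 1) / Real.log ((ρ + 1) / (2 * ρ))))
        (Set.Ioi (0 : ℝ)) ∧
      (∀ β : ℕ → ℝ, Antitone β → (∀ k, β k ∈ Set.Icc (0 : ℝ) 1) → β 0 = 1 →
        (∀ k : ℕ, β k ≤ κ * ρ ^ k) →
        Summable (fun k : ℕ =>
          (phiConj (fun x : ℝ => x * Real.log (x + 1) / Real.log ((ρ + 1) / (2 * ρ)))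
              ((k : ℝ) + 1) -
            phiConj (fun x : ℝ => x * Real.log (x + 1) / Real.log ((ρ + 1) / (2 * ρ)))
              (k : ℝ)) * β k))) ∧
    ∃ c : ℝ, 0 < c ∧ ∀ x : ℝ, 0 < x →
      lambdaMix (fun x : ℝ => x * Real.log (x + 1) / Real.log ((ρ + 1) / (2 * ρ))) x ≤
        c * (max 1 (Real.log x⁻¹) * x) := by
  have ha : 1 < (ρ + 1) / (2 * ρ) := by
    rw [lt_div_iff₀ (by linarith)]; linarith
  have hexp : Real.exp (Real.log ((ρ + 1) / (2 * ρ))) = (ρ + 1) / (2 * ρ) :=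
    Real.exp_log (by linarith)
  have hL : 0 < Real.log ((ρ + 1) / (2 * ρ)) := Real.log_pos ha
  generalize Real.log ((ρ + 1) / (2 * ρ)) = L at hexp hL ⊢
  refine ⟨⟨by simp, convexOn_phiL hL, ?_, ⟨2, fun y hy => deriv_phiL_mul_le hL hy⟩,
    convexOn_div_phiL hL, antitoneOn_div_phiL hL, ?_⟩,
    3 + 2 / L, by positivity, fun x hx => lambdaMix_le hL hx⟩
  · intro x hx
    have hx' : (0 : ℝ) < x := hx
    exact (hasDerivAt_phiL L (by linarith)).differentiableAt.differentiableWithinAt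
  · intro β _ h01 _ hβ
    exact summable_phiConj hρ₀ hρ₁ hL hexp (fun k => (h01 k).1) hβ
end

section
/- Let Δ : ℕ₀ → [0,∞) be nonincreasing with Δ(j) ≤ κ·j^{−α} for all j ≥ 1, for some κ > 0 and α > 1. Then there is a constant c_{κ,α} > 0 depending only on κ and α such that for every x ≥ 0 one can choose ȳ(x) ≥ 0 with Ṽ(√x·ȳ(x)) ≤ ȳ(x) and with the associated rate Λ^dep(x) := √x·ȳ(x) satisfying Λ^dep(x) ≤ c_{κ,α}·max{x^{α/(α+1)}, x}. -/
/-!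
Put `u = √(√x·ȳ)`, so that for `x > 0` one needs `u + ∑ min(u, Δ j) ≤ u² / √x`. Comparing blocks of
length `N` with their first term, an antitone summand satisfies
`∑ min(u, Δ j) ≤ N·u + κ·Z·N^(1-α)` with `Z = ∑ j^(-α)` (`tsum_min_le`).

For `x ≤ 1` let `t = x^(-1/(2(α+1))) ≥ 1`, so that `√x = t^(-(α+1))`; take `u = A·t^(-α)` and
`N = ⌈t⌉ ≤ 2t`. Both terms of the bound are then of order `t^(1-α)`, as is
`u² / √x = A²·t^(1-α)`, so `A = 3 + κ·Z` suffices. For `x ≥ 1` take `u = A·√x` and `N = 1`.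
In both cases `√x·ȳ = u² = A²·max(x^(α/(α+1)), x)`.
-/

lemma sum_range_mul_le_of_antitone {f : ℕ → ℝ} (hf : Antitone f) (N M : ℕ) :
    ∑ j ∈ Finset.range (N * M), f j ≤ N * ∑ q ∈ Finset.range M, f (N * q) := by
  induction M with
  | zero => simp
  | succ M ih =>
    rw [Nat.mul_succ, Finset.sum_range_add, Finset.sum_range_succ, mul_add]
    refine add_le_add ih ?_
    calc ∑ r ∈ Finset.range N, f (N * M + r) ≤ ∑ _r ∈ Finset.range N, f (N * M) :=
          Finset.sum_le_sum fun r _ => hf (Nat.le_add_right _ _)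
      _ = N * f (N * M) := by simp

/-- The truncation bound for the series in `Ṽ`: `N·u` accounts for the first `N` terms and the
decay of `Δ` for the remaining ones. -/
lemma tsum_min_le {κ α u : ℝ} (hκ : 0 < κ) (hα : 1 < α) (hu : 0 ≤ u) {Δ : ℕ → ℝ}
    (h0 : ∀ j, 0 ≤ Δ j) (hanti : Antitone Δ)
    (hd : ∀ j : ℕ, 1 ≤ j → Δ j ≤ κ * (j : ℝ) ^ (-α)) {N : ℕ} (hN : 1 ≤ N) :
    ∑' j : ℕ, min u (Δ j) ≤ N * u + κ * (∑' q : ℕ, (q : ℝ) ^ (-α)) * (N : ℝ) ^ (1 - α) := by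
  have hNpos : (0 : ℝ) < N := by exact_mod_cast hN
  have hs : Summable fun q : ℕ => (q : ℝ) ^ (-α) := Real.summable_nat_rpow.2 (by linarith)
  have hf0 : ∀ j, 0 ≤ min u (Δ j) := fun j => le_min hu (h0 j)
  have hf : Antitone fun j => min u (Δ j) := fun i j hij => min_le_min le_rfl (hanti hij)
  refine Real.tsum_le_of_sum_range_le hf0 fun n => ?_
  have hterm : ∀ q : ℕ, min u (Δ (N * q)) ≤
      (if q = 0 then u else 0) + κ * (N : ℝ) ^ (-α) * (q : ℝ) ^ (-α) := by
    intro q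
    rcases Nat.eq_zero_or_pos q with rfl | hq
    · have : 0 ≤ κ * (N : ℝ) ^ (-α) * ((0 : ℕ) : ℝ) ^ (-α) := by positivity
      simp only [if_true]
      linarith [min_le_left u (Δ (N * 0))]
    · rw [if_neg hq.ne', zero_add]
      refine (min_le_right _ _).trans ((hd _ (Nat.mul_pos hN hq)).trans_eq ?_)
      rw [Nat.cast_mul, Real.mul_rpow hNpos.le (Nat.cast_nonneg q), mul_assoc]
  calc ∑ j ∈ Finset.range n, min u (Δ j)
      ≤ ∑ j ∈ Finset.range (N * n), min u (Δ j) :=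
        Finset.sum_le_sum_of_subset_of_nonneg
          (Finset.range_mono (Nat.le_mul_of_pos_left n hN)) fun j _ _ => hf0 j
    _ ≤ N * ∑ q ∈ Finset.range n, min u (Δ (N * q)) := sum_range_mul_le_of_antitone hf N n
    _ ≤ N * (u + κ * (N : ℝ) ^ (-α) * ∑' q : ℕ, (q : ℝ) ^ (-α)) := by
        refine mul_le_mul_of_nonneg_left ?_ hNpos.le
        refine (Finset.sum_le_sum fun q _ => hterm q).trans ?_
        rw [Finset.sum_add_distrib, ← Finset.mul_sum]
        refine add_le_add ?_ (mul_le_mul_of_nonneg_left ?_ (by positivity))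
        · rw [Finset.sum_ite_eq']
          split_ifs <;> linarith
        · exact hs.sum_le_tsum _ fun q _ => by positivity
    _ = N * u + κ * (∑' q : ℕ, (q : ℝ) ^ (-α)) * (N : ℝ) ^ (1 - α) := by
        rw [sub_eq_add_neg, Real.rpow_add hNpos, Real.rpow_one]
        ring

/-- **Rate `Λ^dep` under polynomial decay of the dependence coefficients.**
For every `κ > 0` and `α > 1` there is a constant `c_{κ,α} > 0` (depending only on
`κ` and `α`) such that: for every nonincreasing `Δ : ℕ → [0,∞)` with
`Δ j ≤ κ·j^(−α)` for `j ≥ 1` and every `x ≥ 0`, one can choose `ȳ(x) ≥ 0` with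
`Ṽ(√x·ȳ(x)) ≤ ȳ(x)` (where `Ṽ(u) = √u + ∑_j min(√u, Δ j)`), whose associated rate
`Λ^dep(x) = √x·ȳ(x)` satisfies `Λ^dep(x) ≤ c_{κ,α}·max(x^{α/(α+1)}, x)`. -/
theorem lambda_dep_polynomial_decay
    (κ α : ℝ) (hκ : 0 < κ) (hα : 1 < α) :
    ∃ c : ℝ, 0 < c ∧
      ∀ Δ : ℕ → ℝ, (∀ j, 0 ≤ Δ j) → Antitone Δ →
        (∀ j : ℕ, 1 ≤ j → Δ j ≤ κ * (j : ℝ) ^ (-α)) →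
        ∀ x : ℝ, 0 ≤ x →
          ∃ ybar : ℝ, 0 ≤ ybar ∧
            (Real.sqrt (Real.sqrt x * ybar) +
                ∑' j : ℕ, min (Real.sqrt (Real.sqrt x * ybar)) (Δ j)) ≤ ybar ∧
            Real.sqrt x * ybar ≤ c * max (x ^ (α / (α + 1))) x := by
  set Z : ℝ := ∑' q : ℕ, (q : ℝ) ^ (-α) with hZ
  have hZ0 : 0 ≤ Z := tsum_nonneg fun q => by positivity
  have hκZ : 0 ≤ κ * Z := by positivity
  obtain ⟨A, hA⟩ : ∃ A : ℝ, A = 3 + κ * Z := ⟨_, rfl⟩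
  have hApos : 0 < A := by linarith
  have hA2 : 3 * A + κ * Z ≤ A ^ 2 := by nlinarith
  refine ⟨A ^ 2, by positivity, fun Δ h0 hanti hd x hx => ?_⟩
  rcases hx.eq_or_lt with rfl | hxpos
  · refine ⟨0, le_rfl, ?_, ?_⟩
    · simp [h0]
    · simp only [mul_zero]
      positivity
  have hsx : 0 < √x := Real.sqrt_pos.2 hxpos
  -- It suffices to choose `u = √(√x·ȳ)`, since then `ȳ = u² / √x`.
  suffices h : ∃ u : ℝ, 0 ≤ u ∧ u + ∑' j : ℕ, min u (Δ j) ≤ u ^ 2 / √x ∧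
      u ^ 2 ≤ A ^ 2 * max (x ^ (α / (α + 1))) x by
    obtain ⟨u, hu, h1, h2⟩ := h
    have he : √x * (u ^ 2 / √x) = u ^ 2 := by field_simp
    refine ⟨u ^ 2 / √x, by positivity, ?_, ?_⟩
    · rw [he, Real.sqrt_sq hu]
      exact h1
    · rw [he]
      exact h2
  rcases le_total x 1 with hx1 | hx1
  · obtain ⟨t, ht⟩ : ∃ t : ℝ, t = x ^ (-(1 / (2 * (α + 1)))) := ⟨_, rfl⟩
    have hα1 : 0 < α + 1 := by linarith
    have ht1 : 1 ≤ t := by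
      rw [ht]
      exact Real.one_le_rpow_of_pos_of_le_one_of_nonpos hxpos hx1
        (neg_nonpos.2 (by positivity))
    have htpos : 0 < t := by linarith
    have hst : √x = t ^ (-(α + 1)) := by
      rw [ht, ← Real.rpow_mul hxpos.le, Real.sqrt_eq_rpow]
      congr 1
      field_simp
    have hut : (t ^ (-α)) ^ 2 = x ^ (α / (α + 1)) := by
      rw [ht, ← Real.rpow_natCast, ← Real.rpow_mul hxpos.le, ← Real.rpow_mul hxpos.le]
      congr 1
      push_cast
      field_simp
    have hy : (A * t ^ (-α)) ^ 2 / √x = A ^ 2 * t ^ (1 - α) := by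
      rw [hst, div_eq_iff (by positivity), mul_pow, mul_assoc, ← Real.rpow_add htpos,
        ← Real.rpow_natCast, ← Real.rpow_natCast (t ^ (-α)), ← Real.rpow_mul htpos.le]
      congr 2
      push_cast
      ring
    have hN : 1 ≤ ⌈t⌉₊ := Nat.one_le_ceil_iff.2 htpos
    have hN1 : t ≤ ⌈t⌉₊ := Nat.le_ceil t
    have hN2 : (⌈t⌉₊ : ℝ) ≤ 2 * t := by linarith [Nat.ceil_lt_add_one htpos.le]
    refine ⟨A * t ^ (-α), by positivity, ?_, ?_⟩
    · rw [hy]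
      have hu : 0 ≤ A * t ^ (-α) := by positivity
      have hb := tsum_min_le hκ hα hu h0 hanti hd hN
      rw [← hZ] at hb
      have hp : (⌈t⌉₊ : ℝ) ^ (1 - α) ≤ t ^ (1 - α) :=
        Real.rpow_le_rpow_of_nonpos htpos hN1 (by linarith)
      have htt : t * (t ^ (-α)) = t ^ (1 - α) := by
        rw [sub_eq_add_neg, Real.rpow_add htpos, Real.rpow_one]
      have e1 : (1 + (⌈t⌉₊ : ℝ)) * (A * t ^ (-α)) ≤ 3 * A * t ^ (1 - α) := by
        rw [← htt]
        calc _ ≤ (3 * t) * (A * t ^ (-α)) := mul_le_mul_of_nonneg_right (by linarith) hu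
          _ = _ := by ring
      have e2 := mul_le_mul_of_nonneg_left hp hκZ
      have e3 := mul_le_mul_of_nonneg_right hA2 (Real.rpow_nonneg htpos.le (1 - α))
      linarith
    · rw [mul_pow, hut]
      gcongr
      exact le_max_left _ _
  · have hs1 : 1 ≤ √x := Real.one_le_sqrt.2 hx1
    have hu : 0 ≤ A * √x := by positivity
    have hb := tsum_min_le hκ hα hu h0 hanti hd le_rfl
    rw [← hZ, Nat.cast_one, Real.one_rpow] at hb
    refine ⟨A * √x, hu, ?_, ?_⟩
    · have hy : (A * √x) ^ 2 / √x = A ^ 2 * √x := by field_simp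
      rw [hy]
      nlinarith
    · rw [mul_pow, Real.sq_sqrt hx]
      gcongr
      exact le_max_right _ _
end

section
/- Orlicz-norm bound: let Z be a real-valued random variable on a probability space with ‖Z‖_∞ := esssup|Z| < ∞ and ‖Z‖_1 := E|Z| > 0, and let φ : [0,∞) → [0,∞) be a strictly increasing, convex, differentiable bijection with φ(0) = 0 and lim_{x→∞} φ(x)/x = ∞. Then the Orlicz norm ‖Z‖_{φ,2} := inf{c > 0 : E[φ((|Z|/c)²)] ≤ 1} satisfies ‖Z‖_{φ,2} ≤ ‖Z‖_∞ · φ^{−1}(‖Z‖_∞/‖Z‖_1)^{−1/2}. -/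
/-!
Write `M = ‖Z‖_∞`, `m = ‖Z‖₁` and `a = φ⁻¹(M / m) > 0`. The number `c = M / √a` is itself
admissible in the infimum: with `t = |Z| / M ∈ [0, 1]`, convexity and `φ 0 = 0` give
`φ((|Z| / c)²) = φ(t² a) ≤ t² φ(a) ≤ t · M / m = |Z| / m` almost surely, and the right-hand
side has expectation `1`.
-/

open MeasureTheory

/-- **Orlicz-norm bound via the `L^∞`- and `L¹`-norms.**
Let `Z` be a real random variable on a probability space with essential supremum
`Zsup = ‖Z‖_∞ < ∞` and `‖Z‖₁ = E|Z| > 0`, and let `φ : [0,∞) → [0,∞)` be a strictly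
increasing, convex, differentiable bijection with `φ 0 = 0` and `φ(x)/x → ∞`.
Then the Orlicz norm `‖Z‖_{φ,2} = inf{c > 0 : E[φ((|Z|/c)²)] ≤ 1}` satisfies
`‖Z‖_{φ,2} ≤ ‖Z‖_∞ · φ⁻¹(‖Z‖_∞/‖Z‖₁)^(−1/2)`. -/
theorem orlicz_norm_le_of_bounded
    {Ω : Type*} [MeasureSpace Ω] [IsProbabilityMeasure (volume : Measure Ω)]
    (Z : Ω → ℝ) (hZ_meas : Measurable Z)
    (Zsup : ℝ)
    (hZsup_bound : ∀ᵐ ω : Ω, |Z ω| ≤ Zsup)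
    (hZsup_least : ∀ c : ℝ, (∀ᵐ ω : Ω, |Z ω| ≤ c) → Zsup ≤ c)
    (hZ1_pos : 0 < ∫ ω, |Z ω|)
    (φ : ℝ → ℝ) (hφ0 : φ 0 = 0)
    (hφ_mono : StrictMonoOn φ (Set.Ici (0 : ℝ)))
    (hφ_convex : ConvexOn ℝ (Set.Ici (0 : ℝ)) φ)
    (hφ_diff : DifferentiableOn ℝ φ (Set.Ioi (0 : ℝ)))
    (hφ_surj : ∀ y : ℝ, 0 ≤ y → ∃ x : ℝ, 0 ≤ x ∧ φ x = y)
    (hφ_superlinear : Filter.Tendsto (fun x => φ x / x) Filter.atTop Filter.atTop)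
    (ι : ℝ → ℝ)
    (hι_left : ∀ x : ℝ, 0 ≤ x → ι (φ x) = x)
    (hι_right : ∀ y : ℝ, 0 ≤ y → φ (ι y) = y) :
    sInf {c : ℝ | 0 < c ∧ ∫ ω, φ ((|Z ω| / c) ^ 2) ≤ 1} ≤
      Zsup * (Real.sqrt (ι (Zsup / ∫ ω, |Z ω|)))⁻¹ := by
  set m := ∫ ω, |Z ω| with hm
  have hint : Integrable (fun ω => |Z ω|) :=
    Integrable.of_integral_ne_zero hZ1_pos.ne'
  have hmM : m ≤ Zsup := by
    have h := integral_mono_ae hint (integrable_const Zsup) hZsup_bound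
    simpa using h
  have hM : 0 < Zsup := hZ1_pos.trans_le hmM
  have hy : 0 < Zsup / m := div_pos hM hZ1_pos
  obtain ⟨a, ha0, hay⟩ := hφ_surj (Zsup / m) hy.le
  have hιa : ι (Zsup / m) = a := by rw [← hay, hι_left a ha0]
  have ha : 0 < a := by
    refine ha0.lt_of_ne fun h => ?_
    rw [← h, hφ0] at hay
    exact hy.ne hay
  rw [hιa]
  have hs : 0 < √a := Real.sqrt_pos.2 ha
  refine csInf_le ⟨0, fun c hc => hc.1.le⟩ ⟨mul_pos hM (inv_pos.2 hs), ?_⟩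
  -- The integrand is dominated by `|Z| / m`, whose integral is `1`.
  have hdom : ∀ᵐ ω : Ω, φ ((|Z ω| / (Zsup * (√a)⁻¹)) ^ 2) ≤ |Z ω| / m := by
    filter_upwards [hZsup_bound] with ω hω
    set t := |Z ω| / Zsup with ht
    have ht0 : 0 ≤ t := div_nonneg (abs_nonneg _) hM.le
    have ht1 : t ≤ 1 := (div_le_one hM).2 hω
    have harg : (|Z ω| / (Zsup * (√a)⁻¹)) ^ 2 = t ^ 2 * a := by
      have h : |Z ω| / (Zsup * (√a)⁻¹) = t * √a := by
        rw [ht]; field_simp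
      rw [h, mul_pow, Real.sq_sqrt ha0]
    -- Convexity together with `φ 0 = 0` gives `φ (s * a) ≤ s * φ a` for `s ∈ [0, 1]`.
    have hconv : φ (t ^ 2 * a) ≤ t ^ 2 * φ a := by
      have h := hφ_convex.2 (Set.mem_Ici.2 ha0) (Set.mem_Ici.2 (le_refl (0 : ℝ)))
        (sq_nonneg t) (sub_nonneg.2 (pow_le_one₀ ht0 ht1 : t ^ 2 ≤ 1)) (by ring)
      simpa [hφ0] using h
    calc φ ((|Z ω| / (Zsup * (√a)⁻¹)) ^ 2) ≤ t ^ 2 * φ a := by rw [harg]; exact hconv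
      _ ≤ t * (Zsup / m) := by
          rw [hay]
          exact mul_le_mul_of_nonneg_right (by nlinarith) hy.le
      _ = |Z ω| / m := by rw [ht]; field_simp
  have hnonneg : ∀ᵐ ω : Ω, 0 ≤ φ ((|Z ω| / (Zsup * (√a)⁻¹)) ^ 2) :=
    Filter.Eventually.of_forall fun ω => by
      have h := hφ_mono.monotoneOn (Set.mem_Ici.2 (le_refl (0 : ℝ)))
        (Set.mem_Ici.2 (sq_nonneg (|Z ω| / (Zsup * (√a)⁻¹)))) (sq_nonneg _)
      rwa [hφ0] at h
  calc ∫ ω, φ ((|Z ω| / (Zsup * (√a)⁻¹)) ^ 2) ≤ ∫ ω, |Z ω| / m :=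
        integral_mono_of_nonneg hnonneg (hint.div_const m) hdom
    _ = 1 := by rw [integral_div, ← hm, div_self hZ1_pos.ne']
end

section
/- Let φ : [0,∞) → [0,∞) be a strictly increasing bijection with φ(0) = 0 such that the map y ↦ y/φ(y) is convex and decreasing on (0,∞). Define φ̃(x) := φ^{−1}(1/x)^{−1/2} for x > 0. Then both φ̃² and φ̃ are concave on (0,∞); in particular both are subadditive on (0,∞). -/
/-!
Write `g = φ̃²`, so `g x = 1 / ι (1 / x)`. Its inverse on `(0,∞)` is `s ↦ 1 / φ (1 / s) = s ψ(1 / s)`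
with `ψ y = y / φ y`: the perspective of the convex function `ψ`, hence convex, and it is increasing.
The inverse of an increasing convex function is concave, so `g` is concave (`inv_conj_concave`), and
`φ̃ = √g` is concave because `√` is concave and increasing. Since `ψ` is decreasing, so is
`g x / x = 1 / ψ (ι (1 / x))` (`inv_conj_mul_le`), which makes `g` subadditive; then
`φ̃(x + y)² ≤ φ̃(x)² + φ̃(y)² ≤ (φ̃(x) + φ̃(y))²`.
-/

/-- `φ̃(x) = φ⁻¹(1/x)^(−1/2)`, the modulus relating the Orlicz norm to the `L¹`-norm. -/
noncomputable def phiTilde (ι : ℝ → ℝ) (x : ℝ) : ℝ := 1 / Real.sqrt (ι (1 / x))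

section aux

variable {φ ι : ℝ → ℝ}

lemma inverse_pos (hφ0 : φ 0 = 0)
    (hφ_surj : ∀ y : ℝ, 0 ≤ y → ∃ x : ℝ, 0 ≤ x ∧ φ x = y)
    (hι_left : ∀ x : ℝ, 0 ≤ x → ι (φ x) = x) {y : ℝ} (hy : 0 < y) : 0 < ι y := by
  obtain ⟨x, hx, rfl⟩ := hφ_surj y hy.le
  rw [hι_left x hx]
  rcases hx.eq_or_lt with rfl | h
  · rw [hφ0] at hy
    exact absurd hy (lt_irrefl _)
  · exact h

/-- The concavity inequality for `x ↦ 1 / ι (1 / x)`. -/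
lemma inv_conj_concave (hφ0 : φ 0 = 0)
    (hφ_mono : StrictMonoOn φ (Set.Ici (0 : ℝ)))
    (hratio_convex : ConvexOn ℝ (Set.Ioi (0 : ℝ)) (fun y => y / φ y))
    (hpos : ∀ y : ℝ, 0 < y → 0 < ι y)
    (hι_right : ∀ y : ℝ, 0 ≤ y → φ (ι y) = y)
    {x y a b : ℝ} (hx : 0 < x) (hy : 0 < y) (ha : 0 ≤ a) (hb : 0 ≤ b) (hab : a + b = 1) :
    a * (1 / ι (1 / x)) + b * (1 / ι (1 / y)) ≤ 1 / ι (1 / (a * x + b * y)) := by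
  have conv_pos : ∀ p q : ℝ, 0 < p → 0 < q → 0 < a * p + b * q := fun p q hp hq =>
    (convex_Ioi (0 : ℝ)) (Set.mem_Ioi.2 hp) (Set.mem_Ioi.2 hq) ha hb hab
  have hz := conv_pos x y hx hy
  set z := a * x + b * y with hzdef
  have hu := hpos _ (one_div_pos.2 hx)
  have hv := hpos _ (one_div_pos.2 hy)
  have hw := hpos _ (one_div_pos.2 hz)
  have eu := hι_right _ (one_div_pos.2 hx).le
  have ev := hι_right _ (one_div_pos.2 hy).le
  have ew := hι_right _ (one_div_pos.2 hz).le
  set u := ι (1 / x)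
  set v := ι (1 / y)
  set w := ι (1 / z)
  have hm := conv_pos (1 / u) (1 / v) (one_div_pos.2 hu) (one_div_pos.2 hv)
  set m := a * (1 / u) + b * (1 / v) with hmdef
  have hminv : 0 < 1 / m := one_div_pos.2 hm
  have hφm : 0 < φ (1 / m) := by
    simpa [hφ0] using hφ_mono (Set.mem_Ici.2 le_rfl) (Set.mem_Ici.2 hminv.le) hminv
  -- `1 / m` is the average of `u` and `v` with the perspective weights `a / (u m)`, `b / (v m)`.
  have key := hratio_convex.2 (Set.mem_Ioi.2 hu) (Set.mem_Ioi.2 hv)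
    (show 0 ≤ a * (1 / u) / m by positivity) (show 0 ≤ b * (1 / v) / m by positivity)
    (by rw [← add_div, ← hmdef, div_self hm.ne'])
  have e1 : (a * (1 / u) / m) • u + (b * (1 / v) / m) • v = 1 / m := by
    simp only [smul_eq_mul]
    field_simp
    exact hab
  have e2 : (a * (1 / u) / m) • (u / φ u) + (b * (1 / v) / m) • (v / φ v) = z / m := by
    simp only [smul_eq_mul, eu, ev, hzdef]
    field_simp
  simp only [e1, e2] at key
  have h1 : 1 / z ≤ φ (1 / m) := by
    rw [div_le_div_iff₀ hφm hm] at key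
    rw [div_le_iff₀ hz]
    have : 1 / m * m = 1 := by field_simp
    linarith
  rw [← ew] at h1
  have h2 : w ≤ 1 / m := (hφ_mono.le_iff_le (Set.mem_Ici.2 hw.le) (Set.mem_Ici.2 hminv.le)).1 h1
  rwa [le_one_div hm hw]

/-- The map `x ↦ (1 / ι (1 / x)) / x` is decreasing, in cross-multiplied form. -/
lemma inv_conj_mul_le
    (hφ_mono : StrictMonoOn φ (Set.Ici (0 : ℝ)))
    (hratio_anti : AntitoneOn (fun y => y / φ y) (Set.Ioi (0 : ℝ)))
    (hpos : ∀ y : ℝ, 0 < y → 0 < ι y)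
    (hι_right : ∀ y : ℝ, 0 ≤ y → φ (ι y) = y)
    {x z : ℝ} (hx : 0 < x) (hxz : x ≤ z) :
    x * (1 / ι (1 / z)) ≤ z * (1 / ι (1 / x)) := by
  have hz := hx.trans_le hxz
  have hu := hpos _ (one_div_pos.2 hx)
  have hw := hpos _ (one_div_pos.2 hz)
  have eu := hι_right _ (one_div_pos.2 hx).le
  have ew := hι_right _ (one_div_pos.2 hz).le
  have hwu : ι (1 / z) ≤ ι (1 / x) := by
    rw [← hφ_mono.le_iff_le (Set.mem_Ici.2 hw.le) (Set.mem_Ici.2 hu.le), eu, ew]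
    exact one_div_le_one_div_of_le hx hxz
  have h := hratio_anti (Set.mem_Ioi.2 hw) (Set.mem_Ioi.2 hu) hwu
  simp only [eu, ew, div_div_eq_mul_div, div_one] at h
  rw [mul_one_div, mul_one_div, div_le_div_iff₀ hw hu]
  linarith

end aux

/-- **Concavity (hence subadditivity) of `φ̃` and `φ̃²`.**
Let `φ : [0,∞) → [0,∞)` be a strictly increasing bijection with `φ 0 = 0` such that
`y ↦ y / φ y` is convex and decreasing on `(0,∞)`, and let `ι = φ⁻¹`.  Then
`φ̃² (x) = φ⁻¹(1/x)⁻¹` and `φ̃` are both concave on `(0,∞)`, and in particular both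
are subadditive on `(0,∞)`. -/
theorem phiTilde_concave_subadditive
    (φ : ℝ → ℝ) (hφ0 : φ 0 = 0)
    (hφ_mono : StrictMonoOn φ (Set.Ici (0 : ℝ)))
    (hφ_surj : ∀ y : ℝ, 0 ≤ y → ∃ x : ℝ, 0 ≤ x ∧ φ x = y)
    (hratio_convex : ConvexOn ℝ (Set.Ioi (0 : ℝ)) (fun y => y / φ y))
    (hratio_anti : AntitoneOn (fun y => y / φ y) (Set.Ioi (0 : ℝ)))
    (ι : ℝ → ℝ)
    (hι_left : ∀ x : ℝ, 0 ≤ x → ι (φ x) = x)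
    (hι_right : ∀ y : ℝ, 0 ≤ y → φ (ι y) = y) :
    ConcaveOn ℝ (Set.Ioi (0 : ℝ)) (fun x => phiTilde ι x ^ 2) ∧
      ConcaveOn ℝ (Set.Ioi (0 : ℝ)) (phiTilde ι) ∧
      (∀ x > (0:ℝ), ∀ y > (0:ℝ),
        phiTilde ι (x + y) ^ 2 ≤ phiTilde ι x ^ 2 + phiTilde ι y ^ 2) ∧
      (∀ x > (0:ℝ), ∀ y > (0:ℝ),
        phiTilde ι (x + y) ≤ phiTilde ι x + phiTilde ι y) := by
  have hpos : ∀ y : ℝ, 0 < y → 0 < ι y := fun y hy => inverse_pos hφ0 hφ_surj hι_left hy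
  have hsq : ∀ x : ℝ, 0 < x → phiTilde ι x ^ 2 = 1 / ι (1 / x) := by
    intro x hx
    rw [phiTilde, div_pow, one_pow, Real.sq_sqrt (hpos _ (one_div_pos.2 hx)).le]
  have hnn : ∀ x : ℝ, 0 ≤ phiTilde ι x := fun x => by
    unfold phiTilde
    positivity
  have hconc : ConcaveOn ℝ (Set.Ioi (0 : ℝ)) (fun x => phiTilde ι x ^ 2) := by
    refine ⟨convex_Ioi 0, fun x hx y hy a b ha hb hab => ?_⟩
    have hz : 0 < a • x + b • y := (convex_Ioi (0 : ℝ)) hx hy ha hb hab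
    simp only [hsq x hx, hsq y hy, hsq _ hz]
    exact inv_conj_concave hφ0 hφ_mono hratio_convex hpos hι_right hx hy ha hb hab
  have hsub : ∀ x > (0:ℝ), ∀ y > (0:ℝ),
      phiTilde ι (x + y) ^ 2 ≤ phiTilde ι x ^ 2 + phiTilde ι y ^ 2 := by
    intro x hx y hy
    have hz : 0 < x + y := add_pos hx hy
    rw [hsq x hx, hsq y hy, hsq _ hz]
    have h1 := inv_conj_mul_le hφ_mono hratio_anti hpos hι_right hx (z := x + y) (by linarith)
    have h2 := inv_conj_mul_le hφ_mono hratio_anti hpos hι_right hy (z := x + y) (by linarith)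
    refine le_of_mul_le_mul_left ?_ hz
    linarith
  refine ⟨hconc, ⟨convex_Ioi 0, fun x hx y hy a b ha hb hab => ?_⟩, hsub, fun x hx y hy => ?_⟩
  · have h := hconc.2 hx hy ha hb hab
    have hj := (convexOn_pow 2).2 (Set.mem_Ici.2 (hnn x)) (Set.mem_Ici.2 (hnn y)) ha hb hab
    exact le_of_pow_le_pow_left₀ two_ne_zero (hnn _) (hj.trans h)
  · have := mul_nonneg (hnn x) (hnn y)
    refine le_of_pow_le_pow_left₀ two_ne_zero (add_nonneg (hnn x) (hnn y)) ?_
    linarith [hsub x hx y hy, add_sq (phiTilde ι x) (phiTilde ι y)]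
end

section
/- Let φ : [0,∞) → [0,∞) be a strictly increasing, convex, differentiable bijection with φ(0) = 0, c₀ := sup_{y>0} φ'(y)·y/φ(y) < ∞, and such that y ↦ y/φ(y) is convex and decreasing on (0,∞). Define φ*(y) := sup_{w>0}{wy − φ(w)} and assume ψ(x) := φ*(x)·x is a strictly increasing bijection of [0,∞). Then for every x > 0, sup_{z>0}{ √x·z − φ(1/z²)^{−1} } ≤ (4c₀)²·ψ^{−1}(1/x)·x. (The left-hand side equals the convex conjugate (φ̃^{−1})*(√x) of the inverse of φ̃(u) := φ^{−1}(1/u)^{−1/2}, and the right-hand side is at most (4c₀)²·Λ^mix(x) with Λ^mix(x) := ⌈ψ^{−1}(x^{−1})⌉·x.) -/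
/-!
Write `u = ψ⁻¹(1/x)`, so `u > 0` and `φ*(u) = 1/(x u)`, put `y = 1/z²` and `s = √x z`, so that
`s² y = x`. Convexity at `0` gives `φ(y) ≤ φ'(y) y`, hence `c₀ ≥ 1`.

If `s ≤ (4c₀)² u x` there is nothing to do. Otherwise `s > 16 u x`, so `y` is small. Since the
supremum defining `φ*(u)` exceeds `1/(2xu)`, some `w` satisfies `w u - φ(w) > 1/(2xu)`; thus
`φ(w) ≤ w u` and `w > 1/(2xu²) > y`. As `φ` is convex with `φ(0) = 0`, its chords give
`φ(y) ≤ (y/w) φ(w) ≤ y u`, so `φ(y)⁻¹ ≥ 1/(y u) = s²/(x u) ≥ s` and the left-hand side is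
nonpositive.
-/

/-- **Unification of `(φ̃⁻¹)*(√x)` and the rate function `Λ^mix`.**
Let `φ : [0,∞) → [0,∞)` be a strictly increasing, convex, differentiable bijection
with `φ 0 = 0`, `c₀ ≥ sup_{y>0} φ'(y)·y/φ(y)`, and `y ↦ y/φ(y)` convex and
decreasing on `(0,∞)`.  With `φ*` the convex conjugate of `φ` and
`ψ(x) = φ*(x)·x` a strictly increasing bijection of `[0,∞)` with inverse `ψinv`,
one has for every `x > 0` and `z > 0`:
`√x·z − φ(1/z²)⁻¹ ≤ (4c₀)²·ψ⁻¹(1/x)·x`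
(i.e. `(φ̃⁻¹)*(√x) ≤ (4c₀)²·ψ⁻¹(1/x)·x ≤ (4c₀)²·Λ^mix(x)`). -/
theorem conjugate_phiTildeInv_le_lambda
    (φ : ℝ → ℝ) (hφ0 : φ 0 = 0)
    (hφ_mono : StrictMonoOn φ (Set.Ici (0 : ℝ)))
    (hφ_convex : ConvexOn ℝ (Set.Ici (0 : ℝ)) φ)
    (hφ_diff : DifferentiableOn ℝ φ (Set.Ioi (0 : ℝ)))
    (hφ_surj : ∀ y : ℝ, 0 ≤ y → ∃ x : ℝ, 0 ≤ x ∧ φ x = y)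
    (c₀ : ℝ) (hc₀ : ∀ y : ℝ, 0 < y → deriv φ y * y ≤ c₀ * φ y)
    (hratio_convex : ConvexOn ℝ (Set.Ioi (0 : ℝ)) (fun y => y / φ y))
    (hratio_anti : AntitoneOn (fun y => y / φ y) (Set.Ioi (0 : ℝ)))
    (φstar : ℝ → ℝ)
    (hφstar : ∀ y : ℝ, 0 ≤ y → IsLUB {z : ℝ | ∃ w > 0, z = w * y - φ w} (φstar y))
    (ψinv : ℝ → ℝ)
    (hψ_left : ∀ u : ℝ, 0 ≤ u → ψinv (φstar u * u) = u)
    (hψ_right : ∀ y : ℝ, 0 ≤ y → φstar (ψinv y) * ψinv y = y)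
    (hψ_nonneg : ∀ y : ℝ, 0 ≤ y → 0 ≤ ψinv y)
    (x : ℝ) (hx : 0 < x) :
    ∀ z > (0:ℝ), Real.sqrt x * z - (φ (1 / z ^ 2))⁻¹ ≤
      (4 * c₀) ^ 2 * (ψinv x⁻¹ * x) := by
  intro z hz
  have hpos : ∀ y : ℝ, 0 < y → 0 < φ y := fun y hy => by
    have h := hφ_mono (Set.mem_Ici.2 le_rfl) (Set.mem_Ici.2 hy.le) hy
    rwa [hφ0] at h
  have hc : 1 ≤ c₀ := by
    have h1 := hφ_convex.slope_le_deriv (x := 0) (y := 1) (by simp) (by simp) one_pos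
      (hφ_diff.differentiableAt (Ioi_mem_nhds one_pos))
    rw [slope_def_field, hφ0] at h1
    have h2 := hc₀ 1 one_pos
    have h3 := hpos 1 one_pos
    by_contra! h
    nlinarith
  have hu0 := hψ_nonneg x⁻¹ (by positivity)
  have hψ := hψ_right x⁻¹ (by positivity)
  set u := ψinv x⁻¹
  have hu : 0 < u := by
    rcases hu0.lt_or_eq with h | h
    · exact h
    · rw [← h, mul_zero] at hψ
      exact absurd hψ (inv_pos.2 hx).ne
  have hstar : φstar u = 1 / (x * u) := by
    field_simp at hψ ⊢
    linarith
  have hy : 0 < 1 / z ^ 2 := by positivity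
  have hsy : (√x * z) ^ 2 * (1 / z ^ 2) = x := by
    rw [mul_pow, Real.sq_sqrt hx.le]
    field_simp
  have hs : 0 < √x * z := by positivity
  generalize 1 / z ^ 2 = y at *
  generalize √x * z = s at *
  have hφy := hpos y hy
  have hux : 0 < u * x := by positivity
  have hK : 16 * (u * x) ≤ (4 * c₀) ^ 2 * (u * x) := by
    gcongr
    nlinarith
  rcases le_or_gt s ((4 * c₀) ^ 2 * (u * x)) with hle | hgt
  · have := inv_pos.2 hφy
    linarith
  have hs16 : 16 * (u * x) < s := hK.trans_lt hgt
  have hhalf : 1 / (2 * (x * u)) < φstar u := by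
    rw [hstar]
    apply one_div_lt_one_div_of_lt <;> nlinarith
  obtain ⟨_, ⟨w, hw, rfl⟩, hlt, -⟩ := (hφstar u hu.le).exists_between hhalf
  have hφw := hpos w hw
  have hq : 0 < 1 / (2 * (x * u)) := by positivity
  have hφwu : φ w ≤ w * u := by linarith
  have hyw : y ≤ w := by
    have h1 : 1 < w * u * (2 * (x * u)) := by
      rw [← div_lt_iff₀ (by positivity)]
      linarith
    have h2 : (16 * (u * x)) ^ 2 * y ≤ x := by
      have h : (16 * (u * x)) ^ 2 * y ≤ s ^ 2 * y := by gcongr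
      exact h.trans_eq hsy
    have h3 : 256 * (u ^ 2 * x) * y ≤ 1 := by
      refine le_of_mul_le_mul_right ?_ hx
      linarith
    have h4 : 0 < u ^ 2 * x := by positivity
    by_contra! h
    nlinarith
  -- The chord of `φ` from `0` to `w` lies above `φ y`.
  have hchord : φ y ≤ y / w * φ w := by
    have h := hφ_convex.2 (Set.mem_Ici.2 le_rfl) (Set.mem_Ici.2 hw.le)
      (sub_nonneg.2 ((div_le_one hw).2 hyw)) (div_nonneg hy.le hw.le) (by ring)
    simpa [hφ0, hw.ne'] using h
  have hφyu : φ y ≤ y * u := by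
    calc φ y ≤ y / w * φ w := hchord
      _ ≤ y / w * (w * u) := by gcongr
      _ = y * u := by field_simp
  have hfin : s ≤ (φ y)⁻¹ := by
    rw [le_inv_comm₀ hs hφy]
    refine hφyu.trans ?_
    rw [← one_div, le_div_iff₀ hs]
    have h1 : y * u * s * s ≤ s := by
      have : y * u * s * s = u * x := by rw [← hsy]; ring
      linarith
    exact le_of_mul_le_mul_right (by linarith) hs
  nlinarith
end

section
/- Let φ : [0,∞) → [0,∞) be a strictly increasing, convex, differentiable bijection with φ(0) = 0 whose conjugate φ*(y) := sup_{x>0}{xy − φ(x)} is finite-valued and for which ψ(x) := φ*(x)·x is a strictly increasing bijection of [0,∞). Let β : ℕ₀ → [0,1] be nonincreasing with β(0) = 1 and C := Σ_{k=0}^∞ (φ*(k+1) − φ*(k))·β(k) < ∞. Define q*(x) := min{q ∈ ℕ, q ≥ 1 : β(q) ≤ q·x} and Λ^mix(x) := ⌈ψ^{−1}(x^{−1})⌉·x. Then for every x > 0, q*(x)·x ≤ 2·max{C,1}·Λ^mix(x). -/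
/-!
Monotonicity of `β` and of `φ*`, together with `φ*(0) = 0`, gives by telescoping
`β q * φ*(q) ≤ ∑_{k < q} (φ*(k+1) - φ*(k)) * β k ≤ C`.
Put `t = ψ⁻¹(x⁻¹)`, so `φ*(t) * t = x⁻¹`, and let `N = ⌈t⌉`, `M = max C 1`. For every `q ≥ N` we have
`φ*(q) ≥ φ*(t) = 1 / (x t)`, hence `β q ≤ C x t ≤ M N x`. Thus `q = ⌈M N⌉` satisfies `β q ≤ q x`,
and `q* ≤ ⌈M N⌉ ≤ 2 M N` because `M N ≥ 1`.
-/

theorem conj_mono {φ φstar : ℝ → ℝ}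
    (h : ∀ y : ℝ, 0 ≤ y → IsLUB {z : ℝ | ∃ x > 0, z = x * y - φ x} (φstar y))
    {a b : ℝ} (ha : 0 ≤ a) (hab : a ≤ b) : φstar a ≤ φstar b := by
  refine (h a ha).2 ?_
  rintro z ⟨u, hu, rfl⟩
  have h1 := (h b (ha.trans hab)).1 ⟨u, hu, rfl⟩
  have h2 := mul_le_mul_of_nonneg_left hab hu.le
  linarith

/-- Surjectivity supplies points `u > 0` with `φ u` arbitrarily small, so the supremum defining
`φ*(0)` is `0`. -/
theorem conj_zero {φ φstar : ℝ → ℝ} (hφ0 : φ 0 = 0)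
    (hmono : StrictMonoOn φ (Set.Ici (0 : ℝ)))
    (hsurj : ∀ y : ℝ, 0 ≤ y → ∃ x : ℝ, 0 ≤ x ∧ φ x = y)
    (h : ∀ y : ℝ, 0 ≤ y → IsLUB {z : ℝ | ∃ x > 0, z = x * y - φ x} (φstar y)) :
    φstar 0 = 0 := by
  apply le_antisymm
  · refine (h 0 le_rfl).2 ?_
    rintro z ⟨u, hu, rfl⟩
    have := hmono (Set.mem_Ici.2 le_rfl) (Set.mem_Ici.2 (le_of_lt hu)) hu
    linarith
  · by_contra! hneg
    obtain ⟨u, hu, hue⟩ := hsurj (-(φstar 0) / 2) (by linarith)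
    have hu0 : 0 < u := by
      refine lt_of_le_of_ne hu ?_
      rintro rfl
      linarith
    have := (h 0 le_rfl).1 ⟨u, hu0, rfl⟩
    linarith

/-- The telescoping bound: a Chebyshev-type inequality for the weights `f (k+1) - f k`. -/
theorem beta_mul_le {f β : ℕ → ℝ} {C : ℝ} (hf : Monotone f) (hf0 : f 0 = 0)
    (hβ : Antitone β) (hβ0 : ∀ k, 0 ≤ β k)
    (hC : HasSum (fun k : ℕ => (f (k + 1) - f k) * β k) C) (q : ℕ) :
    β q * f q ≤ C := by
  have hinc : ∀ k, 0 ≤ f (k + 1) - f k := fun k => sub_nonneg.2 (hf k.le_succ)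
  calc β q * f q = ∑ k ∈ Finset.range q, (f (k + 1) - f k) * β q := by
        rw [← Finset.sum_mul, Finset.sum_range_sub, hf0, sub_zero, mul_comm]
    _ ≤ ∑ k ∈ Finset.range q, (f (k + 1) - f k) * β k :=
        Finset.sum_le_sum fun k hk =>
          mul_le_mul_of_nonneg_left (hβ (Finset.mem_range.1 hk).le) (hinc k)
    _ ≤ C := sum_le_hasSum _ (fun k _ => mul_nonneg (hinc k) (hβ0 k)) hC

/-- **Bound on `q*(x)·x` by the rate function `Λ^mix`.**
Let `φ : [0,∞) → [0,∞)` be a strictly increasing convex differentiable bijection with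
`φ 0 = 0`, with finite convex conjugate `φ*` (characterised by `IsLUB`), and assume
`ψ(x) = φ*(x)·x` is a strictly increasing bijection of `[0,∞)` with inverse `ψinv`.
Let `β : ℕ → [0,1]` be nonincreasing with `β 0 = 1` and
`C = ∑_k (φ*(k+1) − φ*(k))·β k < ∞`.  With `q*(x) = min{q ≥ 1 : β q ≤ q·x}` and
`Λ^mix(x) = ⌈ψ⁻¹(x⁻¹)⌉·x`, one has `q*(x)·x ≤ 2·max(C,1)·Λ^mix(x)` for all `x > 0`. -/
theorem qstar_le_lambda_mix
    (φ : ℝ → ℝ) (hφ0 : φ 0 = 0)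
    (hφ_mono : StrictMonoOn φ (Set.Ici (0 : ℝ)))
    (hφ_convex : ConvexOn ℝ (Set.Ici (0 : ℝ)) φ)
    (hφ_diff : DifferentiableOn ℝ φ (Set.Ioi (0 : ℝ)))
    (hφ_surj : ∀ y : ℝ, 0 ≤ y → ∃ x : ℝ, 0 ≤ x ∧ φ x = y)
    (φstar : ℝ → ℝ)
    (hφstar : ∀ y : ℝ, 0 ≤ y → IsLUB {z : ℝ | ∃ x > 0, z = x * y - φ x} (φstar y))
    (ψinv : ℝ → ℝ)
    (hψ_left : ∀ x : ℝ, 0 ≤ x → ψinv (φstar x * x) = x)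
    (hψ_right : ∀ y : ℝ, 0 ≤ y → φstar (ψinv y) * ψinv y = y)
    (hψ_nonneg : ∀ y : ℝ, 0 ≤ y → 0 ≤ ψinv y)
    (β : ℕ → ℝ) (hβ_anti : Antitone β) (hβ_mem : ∀ k, β k ∈ Set.Icc (0 : ℝ) 1)
    (hβ0 : β 0 = 1)
    (C : ℝ)
    (hC : HasSum (fun k : ℕ => (φstar ((k : ℝ) + 1) - φstar (k : ℝ)) * β k) C)
    (x : ℝ) (hx : 0 < x) :
    ((sInf {q : ℕ | 1 ≤ q ∧ β q ≤ (q : ℝ) * x} : ℕ) : ℝ) * x ≤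
      2 * max C 1 * ((⌈ψinv x⁻¹⌉₊ : ℝ) * x) := by
  have hf : Monotone fun k : ℕ => φstar (k : ℝ) := fun a b hab =>
    conj_mono hφstar a.cast_nonneg (Nat.cast_le.2 hab)
  have hβC := beta_mul_le (C := C) hf
    (by simpa using conj_zero hφ0 hφ_mono hφ_surj hφstar) hβ_anti (fun k => (hβ_mem k).1)
    (by simpa using hC)
  have hxi : 0 < x⁻¹ := inv_pos.2 hx
  have hψ := hψ_right x⁻¹ hxi.le
  have ht0 := hψ_nonneg x⁻¹ hxi.le
  set t := ψinv x⁻¹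
  have ht : 0 < t := by
    refine lt_of_le_of_ne ht0 fun h => ?_
    rw [← h, mul_zero] at hψ
    exact hxi.ne hψ
  have hN : (1 : ℝ) ≤ (⌈t⌉₊ : ℝ) := by exact_mod_cast Nat.ceil_pos.2 ht
  have htN : t ≤ (⌈t⌉₊ : ℝ) := Nat.le_ceil t
  set N : ℝ := (⌈t⌉₊ : ℝ)
  have hM : 1 ≤ max C 1 := le_max_right _ _
  have hCM : C ≤ max C 1 := le_max_left _ _
  set M := max C 1
  have hMN : 1 ≤ M * N := one_le_mul_of_one_le_of_one_le hM hN
  have hNMN : N ≤ M * N := le_mul_of_one_le_left (by linarith) hM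
  have hq : M * N ≤ (⌈M * N⌉₊ : ℝ) := Nat.le_ceil _
  have hq2 : (⌈M * N⌉₊ : ℝ) < M * N + 1 := Nat.ceil_lt_add_one (by linarith)
  have hq1 : 1 ≤ ⌈M * N⌉₊ := Nat.ceil_pos.2 (by linarith)
  set q := ⌈M * N⌉₊
  have hβq : β q ≤ (q : ℝ) * x := by
    have h1 : β q * φstar t ≤ M :=
      (mul_le_mul_of_nonneg_left (conj_mono hφstar ht0 (by linarith)) (hβ_mem q).1).trans
        ((hβC q).trans hCM)
    have h2 : φstar t * t * x = 1 := by rw [hψ, inv_mul_cancel₀ hx.ne']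
    calc β q = β q * φstar t * (t * x) := by linear_combination (-β q) * h2
      _ ≤ M * (t * x) := mul_le_mul_of_nonneg_right h1 (by positivity)
      _ ≤ M * (N * x) := by gcongr
      _ = M * N * x := by ring
      _ ≤ q * x := by gcongr
  have hinf : sInf {q : ℕ | 1 ≤ q ∧ β q ≤ (q : ℝ) * x} ≤ q := Nat.sInf_le ⟨hq1, hβq⟩
  calc ((sInf {q : ℕ | 1 ≤ q ∧ β q ≤ (q : ℝ) * x} : ℕ) : ℝ) * x ≤ (q : ℝ) * x := by gcongr
    _ ≤ (2 * M * N) * x := by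
        gcongr
        linarith
    _ = 2 * M * (N * x) := by ring
end

section
/- Let r₁, r₂, P > 0, b ≥ 0, and let φ : [0,∞) → [0,∞) be a concave, strictly increasing bijection with φ(0) = 0 (so that φ^{−1} is convex). If a ≥ 0 satisfies |a − b| ≤ r₁·φ(r₂·a) + P, then for every η > 0, a ≤ (η/r₂)·(φ^{−1})*((1+η)/η · r₁·r₂) + (1+η)·(b + P), where (φ^{−1})*(y) := sup_{x>0}{xy − φ^{−1}(x)} is the convex conjugate of φ^{−1}. -/
/-!
Put `u = (1 + η) / η * (r₁ * r₂)`. Testing the supremum defining `conj u` at the point `φ t`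
gives the Fenchel–Young inequality `φ t * u - t ≤ conj u` for `t > 0`; letting `t → 0` gives
`0 ≤ conj u`, so it also holds at `t = 0`. Taking `t = r₂ * a` and multiplying by `η / r₂` yields
`(1 + η) * r₁ * φ (r₂ * a) ≤ (η / r₂) * conj u + η * a`, and inserting this in `1 + η` times
`a ≤ b + r₁ * φ (r₂ * a) + P` absorbs `η * a` into the left-hand side.
-/

/-- **Deterministic self-bounding lemma.**
Let `r₁, r₂, P > 0`, `b ≥ 0`, and let `φ : [0,∞) → [0,∞)` be a concave strictly
increasing bijection with `φ 0 = 0`, with inverse `ι = φ⁻¹` (so `ι` is convex).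
If `a ≥ 0` satisfies `|a − b| ≤ r₁·φ(r₂·a) + P`, then for every `η > 0`,
`a ≤ (η/r₂)·(φ⁻¹)*((1+η)/η · r₁·r₂) + (1+η)·(b + P)`, where
`(φ⁻¹)*` is the convex conjugate of `φ⁻¹`. -/
theorem self_bounding_risk_lemma
    (φ : ℝ → ℝ) (hφ0 : φ 0 = 0)
    (hφ_concave : ConcaveOn ℝ (Set.Ici (0 : ℝ)) φ)
    (hφ_mono : StrictMonoOn φ (Set.Ici (0 : ℝ)))
    (hφ_surj : ∀ y : ℝ, 0 ≤ y → ∃ x : ℝ, 0 ≤ x ∧ φ x = y)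
    (ι : ℝ → ℝ)
    (hι_left : ∀ x : ℝ, 0 ≤ x → ι (φ x) = x)
    (hι_right : ∀ y : ℝ, 0 ≤ y → φ (ι y) = y)
    (conj : ℝ → ℝ)
    (hconj : ∀ u : ℝ, 0 ≤ u → IsLUB {z : ℝ | ∃ x > 0, z = x * u - ι x} (conj u))
    (r₁ r₂ P : ℝ) (hr₁ : 0 < r₁) (hr₂ : 0 < r₂) (hP : 0 < P)
    (b : ℝ) (hb : 0 ≤ b) (a : ℝ) (ha : 0 ≤ a)
    (hineq : |a - b| ≤ r₁ * φ (r₂ * a) + P)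
    (η : ℝ) (hη : 0 < η) :
    a ≤ (η / r₂) * conj ((1 + η) / η * (r₁ * r₂)) + (1 + η) * (b + P) := by
  set u := (1 + η) / η * (r₁ * r₂) with hu
  have hu0 : 0 ≤ u := by positivity
  have young_pos : ∀ t : ℝ, 0 < t → 0 < φ t ∧ φ t * u - t ≤ conj u := by
    intro t ht
    have hφt : 0 < φ t := by
      have h := hφ_mono (Set.mem_Ici.2 le_rfl) (Set.mem_Ici.2 ht.le) ht
      rwa [hφ0] at h
    exact ⟨hφt, (hconj u hu0).1 ⟨φ t, hφt, by rw [hι_left t ht.le]⟩⟩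
  have hconj_nonneg : 0 ≤ conj u := by
    refine le_of_forall_pos_le_add fun t ht => ?_
    obtain ⟨hφt, h⟩ := young_pos t ht
    have := mul_nonneg hφt.le hu0
    linarith
  have young : φ (r₂ * a) * u - r₂ * a ≤ conj u := by
    rcases ha.eq_or_lt with h | h
    · simpa [← h, hφ0] using hconj_nonneg
    · exact (young_pos _ (mul_pos hr₂ h)).2
  have scaled : (1 + η) * (r₁ * φ (r₂ * a)) - η * a ≤ (η / r₂) * conj u := by
    have h := mul_le_mul_of_nonneg_left young (div_pos hη hr₂).le
    have e : (η / r₂) * (φ (r₂ * a) * u - r₂ * a)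
        = (1 + η) * (r₁ * φ (r₂ * a)) - η * a := by
      rw [hu]
      field_simp
    rwa [e] at h
  have upper : a - b ≤ r₁ * φ (r₂ * a) + P := (le_abs_self _).trans hineq
  have := mul_le_mul_of_nonneg_left upper (by linarith : (0 : ℝ) ≤ 1 + η)
  linarith
end

section
/- Let Δ : ℕ₀ → [0,∞) be nonincreasing with Σ_j Δ(j) < ∞ and let Ṽ(x) := x^{1/2} + Σ_{j=0}^∞ min{x^{1/2}, Δ(j)}. Then for every c ≥ 1 and every x ≥ 0, (Ṽ^{−1})*(c·x) ≤ c²·(Ṽ^{−1})*(x), where Ṽ^{−1} is the inverse of the strictly increasing bijection Ṽ of [0,∞) and (Ṽ^{−1})*(u) := sup_{y>0}{u·y − Ṽ^{−1}(y)}. -/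
/-!
Since `min (c√a) Δ ≤ c · min (√a) Δ` for `c ≥ 1`, termwise summation gives `Ṽ(c²a) ≤ c Ṽ(a)`.
With `a = Ṽ⁻¹(y/c)` and strict monotonicity of `Ṽ` this becomes `c² Ṽ⁻¹(y/c) ≤ Ṽ⁻¹(y)`, so
`c x y - Ṽ⁻¹(y) ≤ c² (x (y/c) - Ṽ⁻¹(y/c))`, and the claim follows by taking suprema. The supremum
on the right is finite because `Ṽ(a) ≤ √a + ∑ Δ` forces `Ṽ⁻¹` to grow quadratically.
-/

/-- **Quasi-homogeneity of the convex conjugate of `Ṽ⁻¹`.**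
For a nonincreasing summable sequence `Δ` set `Ṽ(x) = √x + ∑_j min(√x, Δ j)`;
`Ṽ` is a strictly increasing bijection of `[0,∞)` with inverse `Vinv`.  Then for
every `c ≥ 1` and `x ≥ 0`, `(Ṽ⁻¹)*(c·x) ≤ c² (Ṽ⁻¹)*(x)`, where
`(Ṽ⁻¹)*(u) = sup_{y>0} (u·y − Ṽ⁻¹(y))`. -/
theorem conjugate_Vinv_scaling
    (Δ : ℕ → ℝ) (hΔ_nonneg : ∀ j, 0 ≤ Δ j) (hΔ_anti : Antitone Δ)
    (hΔ_sum : Summable Δ)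
    (V : ℝ → ℝ)
    (hV : ∀ x : ℝ, 0 ≤ x → V x = Real.sqrt x + ∑' j : ℕ, min (Real.sqrt x) (Δ j))
    (Vinv : ℝ → ℝ)
    (hVinv_left : ∀ x : ℝ, 0 ≤ x → Vinv (V x) = x)
    (hVinv_right : ∀ y : ℝ, 0 ≤ y → V (Vinv y) = y)
    (hVinv_nonneg : ∀ y : ℝ, 0 ≤ y → 0 ≤ Vinv y)
    (c x : ℝ) (hc : 1 ≤ c) (hx : 0 ≤ x) :
    sSup {z : ℝ | ∃ y > 0, z = (c * x) * y - Vinv y} ≤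
      c ^ 2 * sSup {z : ℝ | ∃ y > 0, z = x * y - Vinv y} := by
  have hc0 : 0 < c := by linarith
  have hsum : ∀ s : ℝ, 0 ≤ s → Summable (fun j => min s (Δ j)) := fun s hs =>
    Summable.of_nonneg_of_le (fun j => le_min hs (hΔ_nonneg j)) (fun j => min_le_right _ _) hΔ_sum
  have hstrict : ∀ a b : ℝ, 0 ≤ a → a < b → V a < V b := by
    intro a b ha hab
    rw [hV a ha, hV b (ha.trans hab.le)]
    have h1 : √a < √b := Real.sqrt_lt_sqrt ha hab
    exact add_lt_add_of_lt_of_le h1 ((hsum _ (Real.sqrt_nonneg _)).tsum_le_tsum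
      (fun j => min_le_min_right _ h1.le) (hsum _ (Real.sqrt_nonneg _)))
  have hscale : ∀ a : ℝ, 0 ≤ a → V (c ^ 2 * a) ≤ c * V a := by
    intro a ha
    rw [hV a ha, hV _ (by positivity), Real.sqrt_mul (by positivity), Real.sqrt_sq hc0.le,
      mul_add, ← tsum_mul_left]
    refine add_le_add le_rfl (Summable.tsum_le_tsum (fun j => ?_) (hsum _ (by positivity))
      ((hsum _ (Real.sqrt_nonneg _)).mul_left c))
    rw [mul_min_of_nonneg _ _ hc0.le]
    exact min_le_min_left _ (le_mul_of_one_le_left (hΔ_nonneg j) hc)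
  have hinv : ∀ y : ℝ, 0 < y → c ^ 2 * Vinv (y / c) ≤ Vinv y := by
    intro y hy
    have hyc : 0 ≤ y / c := by positivity
    by_contra! h
    have h1 := hstrict _ _ (hVinv_nonneg y hy.le) h
    have h2 := hscale _ (hVinv_nonneg _ hyc)
    rw [hVinv_right _ hyc, mul_div_cancel₀ _ hc0.ne'] at h2
    rw [hVinv_right _ hy.le] at h1
    linarith
  have hbdd : BddAbove {z : ℝ | ∃ y > 0, z = x * y - Vinv y} := by
    -- With `s = √(Ṽ⁻¹ y)`, `x y - Ṽ⁻¹ y ≤ x ∑ Δ + (x s - s²)`, and `x s - s² ≤ x² / 4`.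
    refine ⟨x * (∑' j, Δ j) + x ^ 2 / 4, ?_⟩
    rintro z ⟨y, hy, rfl⟩
    have h0 := hVinv_nonneg y hy.le
    have h1 := hV _ h0
    rw [hVinv_right y hy.le] at h1
    have h2 : ∑' j, min √(Vinv y) (Δ j) ≤ ∑' j, Δ j :=
      (hsum _ (Real.sqrt_nonneg _)).tsum_le_tsum (fun j => min_le_right _ _) hΔ_sum
    have h3 : x * y ≤ x * (√(Vinv y) + ∑' j, Δ j) :=
      mul_le_mul_of_nonneg_left (by linarith) hx
    nlinarith [Real.sq_sqrt h0, sq_nonneg (√(Vinv y) - x / 2)]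
  refine csSup_le ⟨_, 1, one_pos, rfl⟩ ?_
  rintro z ⟨y, hy, rfl⟩
  have h1 : x * (y / c) - Vinv (y / c) ≤ sSup {z : ℝ | ∃ y > 0, z = x * y - Vinv y} :=
    le_csSup hbdd ⟨y / c, by positivity, rfl⟩
  calc c * x * y - Vinv y ≤ c * x * y - c ^ 2 * Vinv (y / c) := by linarith [hinv y hy]
    _ = c ^ 2 * (x * (y / c) - Vinv (y / c)) := by field_simp
    _ ≤ _ := mul_le_mul_of_nonneg_left h1 (by positivity)
end

section
/- Let (a_k)_{k≥1} be a nonincreasing sequence of nonnegative real numbers with Σ_{k=1}^∞ a_k < ∞, and let N ∈ ℕ ∪ {∞}. Then the function v : [0,∞) → [0,∞), v(y) := ( Σ_{k=1}^N min{√y, a_k} )², is concave on [0,∞). -/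
/-!
Expanding the square gives the double sum of the products `min (√y) (a j) * min (√y) (a k)`.
Since all factors are nonnegative, such a product is the minimum of the four cross products
`y`, `√y * a k`, `a j * √y`, `a j * a k`, each of which is concave in `y ≥ 0`; hence every
finite truncation is concave. The infinite case is the
pointwise limit of the finite ones.
-/

lemma concaveOn_min_sqrt_mul_min_sqrt {b c : ℝ} (hb : 0 ≤ b) (hc : 0 ≤ c) :
    ConcaveOn ℝ (Set.Ici (0 : ℝ))
      (fun y => min (Real.sqrt y) b * min (Real.sqrt y) c) := by
  have hs : ConcaveOn ℝ (Set.Ici (0 : ℝ)) Real.sqrt :=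
    Real.strictConcaveOn_sqrt.concaveOn
  have hid : ConcaveOn ℝ (Set.Ici (0 : ℝ)) (fun y : ℝ => y) := concaveOn_id (convex_Ici 0)
  have hconst : ConcaveOn ℝ (Set.Ici (0 : ℝ)) (fun _ : ℝ => b * c) :=
    concaveOn_const _ (convex_Ici 0)
  refine ((hid.inf (hs.smul hc)).inf ((hs.smul hb).inf hconst)).congr ?_
  intro y hy
  have h0 : 0 ≤ Real.sqrt y := Real.sqrt_nonneg y
  have hm : 0 ≤ min (Real.sqrt y) c := le_min h0 hc
  simp only [Pi.inf_apply, smul_eq_mul]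
  rw [min_mul_of_nonneg _ _ hm, mul_min_of_nonneg _ _ h0, mul_min_of_nonneg _ _ hb,
    Real.mul_self_sqrt hy, mul_comm (Real.sqrt y) c]

lemma concaveOn_sq_finset_sum_min_sqrt {ι : Type*} (s : Finset ι) (a : ι → ℝ)
    (ha : ∀ k, 0 ≤ a k) :
    ConcaveOn ℝ (Set.Ici (0 : ℝ)) (fun y => (∑ k ∈ s, min (Real.sqrt y) (a k)) ^ 2) := by
  simp only [sq, Finset.sum_mul_sum]
  refine ⟨convex_Ici 0, fun x hx y hy p q hp hq hpq => ?_⟩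
  simp only [Finset.smul_sum, ← Finset.sum_add_distrib]
  exact Finset.sum_le_sum fun j _ => Finset.sum_le_sum fun k _ =>
    (concaveOn_min_sqrt_mul_min_sqrt (ha j) (ha k)).2 hx hy hp hq hpq

/-- **Concavity of the squared truncated sum.**
For a nonincreasing nonnegative summable sequence `(a_k)_{k ≥ 1}` and `N ∈ ℕ ∪ {∞}`,
the map `y ↦ (∑_{k=1}^N min (√y) (a k))²` is concave on `[0,∞)`
(the case `N = ∞` being realized by the `tsum`). -/
theorem concaveOn_sq_sum_min_sqrt
    (a : ℕ → ℝ) (ha_nonneg : ∀ k, 0 ≤ a k)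
    (ha_anti : ∀ k l, 1 ≤ k → k ≤ l → a l ≤ a k)
    (ha_sum : Summable (fun k => a (k + 1))) :
    (∀ N : ℕ, ConcaveOn ℝ (Set.Ici (0 : ℝ))
        (fun y => (∑ k ∈ Finset.Icc 1 N, min (Real.sqrt y) (a k)) ^ 2)) ∧
      ConcaveOn ℝ (Set.Ici (0 : ℝ))
        (fun y => (∑' k : ℕ, min (Real.sqrt y) (a (k + 1))) ^ 2) := by
  refine ⟨fun N => concaveOn_sq_finset_sum_min_sqrt _ a ha_nonneg,
    convex_Ici 0, fun x hx y hy p q hp hq hpq => ?_⟩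
  have hlim : ∀ z : ℝ, Filter.Tendsto
      (fun n => (∑ k ∈ Finset.range n, min (Real.sqrt z) (a (k + 1))) ^ 2) Filter.atTop
      (nhds ((∑' k : ℕ, min (Real.sqrt z) (a (k + 1))) ^ 2)) := fun z =>
    ((ha_sum.of_nonneg_of_le (fun k => le_min (Real.sqrt_nonneg z) (ha_nonneg (k + 1)))
      (fun k => min_le_right _ _)).hasSum.tendsto_sum_nat).pow 2
  exact le_of_tendsto_of_tendsto' (((hlim x).const_smul p).add ((hlim y).const_smul q))
    (hlim (p • x + q • y)) fun n =>
      (concaveOn_sq_finset_sum_min_sqrt (Finset.range n) (fun k => a (k + 1))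
        (fun k => ha_nonneg (k + 1))).2 hx hy hp hq hpq
end

section
/- For m ∈ ℕ define T^k : [0,∞) → ℝ by T^k(x) := min{x/2, 2^{1−2k} − x/2} for k ≥ 1, R^k := T^k ∘ T^{k−1} ∘ ⋯ ∘ T^1, and mult_m(x,y) := ( Σ_{k=1}^{m+1} [ R^k((x−y+1)/2) − R^k((x+y)/2) ] + (x+y)/2 − 1/4 )₊ for x, y ∈ [0,1], where (z)₊ := max{z,0}. Then: (a) for all x, y ∈ [0,1], |mult_m(x,y) − x·y| ≤ 2^{−m−1}·(x+y) ≤ 2^{−m}; (b) at every point (x,y) ∈ [0,1]² at which the partial derivative ∂₁mult_m(x,y) (respectively ∂₂mult_m(x,y)) exists, |∂₁mult_m(x,y) − y| ≤ 2^{−m−1} (respectively |∂₂mult_m(x,y) − x| ≤ 2^{−m−1}). -/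
/-!
Write `F n = ∑_{k=1}^n R^k`. Two facts about the triangle waves carry the proof.

* Self-similarity: `x - x² - F n x = R^n x - 4^n (R^n x)²`. On `[0,1]`, `R^n` takes values in
  `[0, 4^{-n}]` and is `2^{-n}`-Lipschitz, and `z ↦ z - 4^n z²` is `1`-Lipschitz on `[0, 4^{-n}]`;
  hence the error `E n x = x - x² - F n x` is `2^{-n}`-Lipschitz on `[0,1]`.
* Symmetry about `1/2` together with the shift relation `F n (1/2 + t) = F n t + 1/4 - t` for
  `n ≥ 1`, `0 ≤ t ≤ 1/2`. With `v = (x+y)/2` and `w = |x-y|/2` it turns the expression inside the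
  positive part of `mult_m` into `(v - F v) - (w - F w)`, where `F = F (m+1)`. Since `F` is
  `1`-Lipschitz, `t ↦ t - F t` is monotone, so this is nonnegative and the positive part is
  redundant on the unit square.

As `v² - w² = x y`, the approximation error is `mult_m(x,y) - x y = E v - E w`. The Lipschitz bound
for `E` and `v - w = min x y` give (a). The error is also `2^{-m-1}`-Lipschitz in each of `x` and
`y`, which bounds any derivative, one-sided ones at the boundary of the square included.
-/

/-- Triangle-wave building block `T^k(x) = min(x/2, 2^{1−2k} − x/2)`. -/
noncomputable def Tfun (k : ℕ) (x : ℝ) : ℝ :=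
  min (x / 2) ((2 : ℝ) ^ (1 - 2 * (k : ℤ)) - x / 2)

/-- `R^k = T^k ∘ T^{k−1} ∘ ⋯ ∘ T^1` (with `R^0 = id`). -/
noncomputable def Rfun : ℕ → ℝ → ℝ
  | 0 => id
  | k + 1 => fun x => Tfun (k + 1) (Rfun k x)

/-- The piecewise linear approximation of the product of two numbers in `[0,1]`:
`mult_m(x,y) = ( ∑_{k=1}^{m+1} [R^k((x−y+1)/2) − R^k((x+y)/2)] + (x+y)/2 − 1/4 )₊`. -/
noncomputable def multApprox (m : ℕ) (x y : ℝ) : ℝ :=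
  max ((∑ k ∈ Finset.Icc 1 (m + 1),
      (Rfun k ((x - y + 1) / 2) - Rfun k ((x + y) / 2))) + (x + y) / 2 - 1 / 4) 0

/-- The partial sum `∑_{k=1}^n R^k(x)`. -/
noncomputable def waveSum (n : ℕ) (x : ℝ) : ℝ := ∑ k ∈ Finset.range n, Rfun (k + 1) x

/-- The error of `waveSum n` as an approximation of `x - x²`. -/
noncomputable def waveErr (n : ℕ) (x : ℝ) : ℝ := x - x ^ 2 - waveSum n x

lemma Rfun_succ (k : ℕ) (x : ℝ) :
    Rfun (k + 1) x = min (Rfun k x / 2) ((1 / 4 : ℝ) ^ k / 2 - Rfun k x / 2) := by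
  have h : (2 : ℝ) ^ (1 - 2 * ((k + 1 : ℕ) : ℤ)) = (1 / 4 : ℝ) ^ k / 2 := by
    have e : (1 - 2 * ((k + 1 : ℕ) : ℤ)) = -((2 * k : ℕ) : ℤ) - 1 := by push_cast; ring
    rw [e, zpow_sub₀ two_ne_zero, zpow_neg, zpow_natCast, pow_mul, zpow_one, one_div, inv_pow]
    norm_num
  simp only [Rfun, Tfun]
  rw [h]

lemma Rfun_mem {x : ℝ} (h0 : 0 ≤ x) (h1 : x ≤ 1) (k : ℕ) :
    0 ≤ Rfun k x ∧ Rfun k x ≤ (1 / 4 : ℝ) ^ k := by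
  induction k with
  | zero => simpa [Rfun] using ⟨h0, h1⟩
  | succ k ih =>
    rw [Rfun_succ, pow_succ]
    obtain ⟨a, b⟩ := ih
    constructor
    · exact le_min (by linarith) (by linarith)
    · rcases min_cases (Rfun k x / 2) ((1 / 4 : ℝ) ^ k / 2 - Rfun k x / 2) with h | h <;> linarith

lemma Rfun_lip (k : ℕ) (x y : ℝ) :
    |Rfun k x - Rfun k y| ≤ (1 / 2 : ℝ) ^ k * |x - y| := by
  induction k with
  | zero => simp [Rfun]
  | succ k ih =>
    rw [Rfun_succ, Rfun_succ, pow_succ]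
    refine (abs_min_sub_min_le_max _ _ _ _).trans (max_le ?_ ?_)
    · rw [← sub_div, abs_div, abs_two]
      linarith
    · have e : (1 / 4 : ℝ) ^ k / 2 - Rfun k x / 2 - ((1 / 4 : ℝ) ^ k / 2 - Rfun k y / 2)
          = -((Rfun k x - Rfun k y) / 2) := by ring
      rw [e, abs_neg, abs_div, abs_two]
      linarith

lemma waveSum_succ (n : ℕ) (x : ℝ) : waveSum (n + 1) x = waveSum n x + Rfun (n + 1) x :=
  Finset.sum_range_succ _ _

lemma waveSum_lip (n : ℕ) (x y : ℝ) :
    |waveSum n x - waveSum n y| ≤ (1 - (1 / 2 : ℝ) ^ n) * |x - y| := by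
  induction n with
  | zero => simp [waveSum]
  | succ n ih =>
    have h := Rfun_lip (n + 1) x y
    have e : waveSum (n + 1) x - waveSum (n + 1) y
        = (waveSum n x - waveSum n y) + (Rfun (n + 1) x - Rfun (n + 1) y) := by
      rw [waveSum_succ, waveSum_succ]; ring
    rw [e]
    refine (abs_add_le _ _).trans ((add_le_add ih h).trans (le_of_eq ?_))
    ring

lemma sub_waveSum_mono (n : ℕ) {s t : ℝ} (h : s ≤ t) : s - waveSum n s ≤ t - waveSum n t := by
  have h1 := waveSum_lip n t s
  rw [abs_of_nonneg (sub_nonneg.2 h)] at h1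
  have h2 : 0 ≤ (1 / 2 : ℝ) ^ n * (t - s) := mul_nonneg (by positivity) (sub_nonneg.2 h)
  linarith [le_abs_self (waveSum n t - waveSum n s)]

/-- Self-similarity: the remainder after `n` waves is a rescaled copy of `z - z²` composed with
`R^n`. -/
lemma waveErr_eq (n : ℕ) (x : ℝ) : waveErr n x = Rfun n x - 4 ^ n * Rfun n x ^ 2 := by
  induction n with
  | zero => simp [waveErr, waveSum, Rfun]
  | succ n ih =>
    have e : waveErr (n + 1) x = waveErr n x - Rfun (n + 1) x := by
      rw [waveErr, waveErr, waveSum_succ]; ring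
    have hp : (4 : ℝ) ^ n * (1 / 4) ^ n = 1 := by rw [← mul_pow]; norm_num
    rw [e, ih, Rfun_succ, pow_succ]
    rcases min_choice (Rfun n x / 2) ((1 / 4 : ℝ) ^ n / 2 - Rfun n x / 2) with h | h <;> rw [h]
    · ring
    · linear_combination ((1 / 4 : ℝ) ^ n - 2 * Rfun n x) * hp

lemma waveErr_lip (n : ℕ) {x y : ℝ} (hx0 : 0 ≤ x) (hx1 : x ≤ 1) (hy0 : 0 ≤ y) (hy1 : y ≤ 1) :
    |waveErr n x - waveErr n y| ≤ (1 / 2 : ℝ) ^ n * |x - y| := by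
  obtain ⟨a0, a1⟩ := Rfun_mem hx0 hx1 n
  obtain ⟨b0, b1⟩ := Rfun_mem hy0 hy1 n
  have hp : (4 : ℝ) ^ n * (1 / 4) ^ n = 1 := by rw [← mul_pow]; norm_num
  have h4 : (0 : ℝ) < 4 ^ n := by positivity
  have e : waveErr n x - waveErr n y
      = (1 - 4 ^ n * (Rfun n x + Rfun n y)) * (Rfun n x - Rfun n y) := by
    rw [waveErr_eq, waveErr_eq]; ring
  have h1 : |1 - (4 : ℝ) ^ n * (Rfun n x + Rfun n y)| ≤ 1 := by
    have c1 : (4 : ℝ) ^ n * Rfun n x ≤ 1 := hp ▸ mul_le_mul_of_nonneg_left a1 h4.le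
    have c2 : (4 : ℝ) ^ n * Rfun n y ≤ 1 := hp ▸ mul_le_mul_of_nonneg_left b1 h4.le
    have c3 := mul_nonneg h4.le a0
    have c4 := mul_nonneg h4.le b0
    rw [abs_le]
    constructor <;> linarith
  rw [e, abs_mul]
  exact (mul_le_of_le_one_left (abs_nonneg _) h1).trans (Rfun_lip n x y)

lemma Rfun_symm (k : ℕ) (s : ℝ) : Rfun (k + 1) (1 / 2 - s) = Rfun (k + 1) (1 / 2 + s) := by
  induction k with
  | zero =>
    rw [Rfun_succ, Rfun_succ, min_comm]
    simp only [Rfun, id, pow_zero]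
    congr 1 <;> ring
  | succ k ih => rw [Rfun_succ, ih, ← Rfun_succ]

lemma Rfun_shift {t : ℝ} (h0 : 0 ≤ t) (h1 : t ≤ 1 / 2) :
    Rfun 1 t = t / 2 ∧ Rfun 1 (1 / 2 + t) = 1 / 4 - t / 2 ∧
      ∀ k, Rfun (k + 2) (1 / 2 + t) = Rfun (k + 2) t := by
  have e1 : Rfun 1 t = t / 2 := by
    rw [Rfun_succ]
    simp only [Rfun, id, pow_zero]
    exact min_eq_left (by linarith)
  have e2 : Rfun 1 (1 / 2 + t) = 1 / 4 - t / 2 := by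
    rw [Rfun_succ]
    simp only [Rfun, id, pow_zero]
    rw [min_eq_right (by linarith)]
    ring
  refine ⟨e1, e2, fun k => ?_⟩
  induction k with
  | zero =>
    rw [Rfun_succ, Rfun_succ 1 t, e1, e2, min_comm]
    congr 1 <;> ring
  | succ k ih => rw [Rfun_succ, ih, ← Rfun_succ]

lemma waveSum_shift (n : ℕ) {t : ℝ} (h0 : 0 ≤ t) (h1 : t ≤ 1 / 2) :
    waveSum (n + 1) (1 / 2 + t) = waveSum (n + 1) t + 1 / 4 - t := by
  obtain ⟨e1, e2, e3⟩ := Rfun_shift h0 h1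
  induction n with
  | zero => simp only [waveSum, zero_add, Finset.sum_range_one, e1, e2]; ring
  | succ n ih => rw [waveSum_succ, waveSum_succ _ t, ih, e3]; ring

lemma waveSum_half_add (n : ℕ) {s : ℝ} (hs : |s| ≤ 1 / 2) :
    waveSum (n + 1) (1 / 2 + s) = waveSum (n + 1) |s| + 1 / 4 - |s| := by
  rw [← waveSum_shift n (abs_nonneg s) hs]
  rcases abs_choice s with h | h <;> rw [h]
  refine Finset.sum_congr rfl fun k _ => ?_
  rw [← Rfun_symm, sub_eq_add_neg]

/-- On the unit square the positive part in `multApprox` is redundant, and the error is a difference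
of two values of `waveErr`. -/
lemma multApprox_sub (m : ℕ) {x y : ℝ} (hx : x ∈ Set.Icc (0 : ℝ) 1) (hy : y ∈ Set.Icc (0 : ℝ) 1) :
    multApprox m x y - x * y
      = waveErr (m + 1) ((x + y) / 2) - waveErr (m + 1) (|x - y| / 2) := by
  obtain ⟨hx0, hx1⟩ := hx
  obtain ⟨hy0, hy1⟩ := hy
  have hs : |(x - y) / 2| = |x - y| / 2 := by rw [abs_div, abs_two]
  have hle : |x - y| ≤ 1 := abs_le.2 ⟨by linarith, by linarith⟩
  have hwv : |x - y| / 2 ≤ (x + y) / 2 := by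
    have : |x - y| ≤ x + y := abs_le.2 ⟨by linarith, by linarith⟩
    linarith
  have hsum : ∑ k ∈ Finset.Icc 1 (m + 1), (Rfun k ((x - y + 1) / 2) - Rfun k ((x + y) / 2))
      = waveSum (m + 1) (1 / 2 + (x - y) / 2) - waveSum (m + 1) ((x + y) / 2) := by
    rw [waveSum, waveSum, ← Finset.sum_sub_distrib, Finset.range_eq_Ico,
      Finset.sum_Ico_add' (fun k => Rfun k (1 / 2 + (x - y) / 2) - Rfun k ((x + y) / 2)) 0 (m + 1) 1]
    refine Finset.sum_congr (by ext; simp) fun k _ => ?_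
    congr 2
    ring
  have hmono := sub_waveSum_mono (m + 1) hwv
  rw [multApprox, hsum, waveSum_half_add m (by rw [hs]; linarith), hs, max_eq_left (by linarith),
    waveErr, waveErr]
  linear_combination (-1 / 4) * sq_abs (x - y)

/-- The error of `multApprox` is `2^{-m-1}`-Lipschitz for the `ℓ¹` distance on the unit square. -/
lemma multApprox_sub_lip (m : ℕ) {x y x' y' : ℝ}
    (hx : x ∈ Set.Icc (0 : ℝ) 1) (hy : y ∈ Set.Icc (0 : ℝ) 1)
    (hx' : x' ∈ Set.Icc (0 : ℝ) 1) (hy' : y' ∈ Set.Icc (0 : ℝ) 1) :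
    |(multApprox m x' y' - x' * y') - (multApprox m x y - x * y)|
      ≤ (1 / 2 : ℝ) ^ (m + 1) * (|x' - x| + |y' - y|) := by
  rw [multApprox_sub m hx hy, multApprox_sub m hx' hy']
  obtain ⟨hx0, hx1⟩ := hx
  obtain ⟨hy0, hy1⟩ := hy
  obtain ⟨hx0', hx1'⟩ := hx'
  obtain ⟨hy0', hy1'⟩ := hy'
  have hle : |x - y| ≤ 1 := abs_le.2 ⟨by linarith, by linarith⟩
  have hle' : |x' - y'| ≤ 1 := abs_le.2 ⟨by linarith, by linarith⟩
  have hn := abs_nonneg (x - y)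
  have hn' := abs_nonneg (x' - y')
  have h1 := waveErr_lip (m + 1) (x := (x' + y') / 2) (y := (x + y) / 2)
    (by linarith) (by linarith) (by linarith) (by linarith)
  have h2 := waveErr_lip (m + 1) (x := |x' - y'| / 2) (y := |x - y| / 2)
    (by linarith) (by linarith) (by linarith) (by linarith)
  have d1 : |(x' + y') / 2 - (x + y) / 2| ≤ (|x' - x| + |y' - y|) / 2 := by
    rw [← sub_div, abs_div, abs_two, add_sub_add_comm]
    linarith [abs_add_le (x' - x) (y' - y)]
  have d2 : |(|x' - y'| / 2 - |x - y| / 2)| ≤ (|x' - x| + |y' - y|) / 2 := by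
    rw [← sub_div, abs_div, abs_two]
    have c := abs_abs_sub_abs_le (x' - y') (x - y)
    rw [sub_sub_sub_comm] at c
    linarith [abs_sub (x' - x) (y' - y)]
  have hp : (0 : ℝ) ≤ (1 / 2) ^ (m + 1) := by positivity
  have k1 := h1.trans (mul_le_mul_of_nonneg_left d1 hp)
  have k2 := h2.trans (mul_le_mul_of_nonneg_left d2 hp)
  rw [sub_sub_sub_comm]
  refine (abs_sub _ _).trans ((add_le_add k1 k2).trans (le_of_eq ?_))
  ring

/-- A two-sided derivative at a point of `[0,1]` is bounded by a Lipschitz constant on `[0,1]`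
alone, since `[0,1]` accumulates at each of its points. -/
lemma abs_deriv_le_of_lip_Icc {g : ℝ → ℝ} {d x C : ℝ} (hx : x ∈ Set.Icc (0 : ℝ) 1)
    (hd : HasDerivAt g d x) (hg : ∀ t ∈ Set.Icc (0 : ℝ) 1, |g t - g x| ≤ C * |t - x|) :
    |d| ≤ C := by
  have h := (hasDerivWithinAt_iff_tendsto_slope.1 (hd.hasDerivWithinAt (s := Set.Icc 0 1))).abs
  have hu : UniqueDiffWithinAt ℝ (Set.Icc (0 : ℝ) 1) x :=
    uniqueDiffOn_Icc zero_lt_one x hx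
  have : (nhdsWithin x (Set.Icc (0 : ℝ) 1 \ {x})).NeBot :=
    accPt_principal_iff_nhdsWithin.1 hu.accPt
  refine le_of_tendsto h ?_
  filter_upwards [self_mem_nhdsWithin] with t ht
  have hpos : 0 < |t - x| := abs_pos.2 (sub_ne_zero.2 ht.2)
  rw [slope_def_field, abs_div, div_le_iff₀ hpos]
  exact hg t ht.1

/-- **Approximate multiplication and its partial derivatives.**
(a) For `x, y ∈ [0,1]`, `|mult_m(x,y) − x·y| ≤ 2^{−m−1}(x+y) ≤ 2^{−m}`.
(b) Wherever the partial derivative of `mult_m` in the first (resp. second)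
argument exists, it is within `2^{−m−1}` of `y` (resp. `x`). -/
theorem multApprox_properties (m : ℕ) :
    (∀ x ∈ Set.Icc (0 : ℝ) 1, ∀ y ∈ Set.Icc (0 : ℝ) 1,
      |multApprox m x y - x * y| ≤ (2 : ℝ) ^ (-(m : ℤ) - 1) * (x + y) ∧
        |multApprox m x y - x * y| ≤ (2 : ℝ) ^ (-(m : ℤ))) ∧
    (∀ x ∈ Set.Icc (0 : ℝ) 1, ∀ y ∈ Set.Icc (0 : ℝ) 1, ∀ d : ℝ,
      HasDerivAt (fun t => multApprox m t y) d x →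
        |d - y| ≤ (2 : ℝ) ^ (-(m : ℤ) - 1)) ∧
    (∀ x ∈ Set.Icc (0 : ℝ) 1, ∀ y ∈ Set.Icc (0 : ℝ) 1, ∀ d : ℝ,
      HasDerivAt (fun t => multApprox m x t) d y →
        |d - x| ≤ (2 : ℝ) ^ (-(m : ℤ) - 1)) := by
  have hpow : (2 : ℝ) ^ (-(m : ℤ) - 1) = (1 / 2 : ℝ) ^ (m + 1) := by
    rw [zpow_sub₀ two_ne_zero, zpow_neg, zpow_natCast, zpow_one, pow_succ, one_div, inv_pow]
    ring
  have hpow' : (2 : ℝ) ^ (-(m : ℤ)) = (1 / 2 : ℝ) ^ (m + 1) * 2 := by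
    rw [zpow_neg, zpow_natCast, pow_succ, one_div, inv_pow]
    ring
  have hp : (0 : ℝ) ≤ (1 / 2) ^ (m + 1) := by positivity
  rw [hpow, hpow']
  refine ⟨fun x hx y hy => ?_, fun x hx y hy d hd => ?_, fun x hx y hy d hd => ?_⟩
  · have h : |multApprox m x y - x * y| ≤ (1 / 2 : ℝ) ^ (m + 1) * (x + y) := by
      have hle : |x - y| ≤ x + y := abs_le.2 ⟨by linarith [hx.1], by linarith [hy.1]⟩
      have hn := abs_nonneg (x - y)
      rw [multApprox_sub m hx hy]
      refine (waveErr_lip (m + 1) ?_ ?_ ?_ ?_).trans (mul_le_mul_of_nonneg_left ?_ hp)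
      · linarith
      · linarith [hx.2, hy.2]
      · linarith
      · linarith [hx.2, hy.2]
      · rw [abs_of_nonneg (by linarith)]
        linarith
    exact ⟨h, h.trans (mul_le_mul_of_nonneg_left (by linarith [hx.2, hy.2]) hp)⟩
  · have hg : HasDerivAt (fun t => multApprox m t y - t * y) (d - 1 * y) x :=
      hd.sub ((hasDerivAt_id x).mul_const y)
    rw [one_mul] at hg
    refine abs_deriv_le_of_lip_Icc hx hg fun t ht => ?_
    simpa using multApprox_sub_lip m hx hy ht hy
  · have hg : HasDerivAt (fun t => multApprox m x t - x * t) (d - x * 1) y :=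
      hd.sub ((hasDerivAt_id y).const_mul x)
    rw [mul_one] at hg
    refine abs_deriv_le_of_lip_Icc hy hg fun t ht => ?_
    simpa using multApprox_sub_lip m hx hy hx ht
end

section
/- Let β : ℕ₀ → [0,1] be nonincreasing and submultiplicative in the sense that β(q₁·q₂) ≤ C_{β,sub}·β(q₁)·β(q₂) for all q₁, q₂ ∈ ℕ₀, for some constant C_{β,sub} > 0. For r ∈ ℕ₀ define β̃(k) := β((k − r) ∨ 0), where (a ∨ b) := max{a,b} and subtraction is truncated at 0. Then for all q₁, q₂ ∈ ℕ₀, β̃(q₁·q₂) ≤ C_{β,sub}·β̃(q₁)·β̃(q₂). (The proof rests on the elementary inequality ((q₁−r) ∨ 0)·((q₂−r) ∨ 0) ≤ (q₁·q₂ − r) ∨ 0 for natural numbers q₁, q₂, r.) -/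
/-!
In `ℕ` with truncated subtraction, `(q₁ - r) * (q₂ - r) ≤ q₁ * q₂ - r`. Since `β` is nonincreasing,
`β (q₁ * q₂ - r) ≤ β ((q₁ - r) * (q₂ - r))`, and submultiplicativity of `β` bounds the right side.
-/

/-- **Lagged mixing coefficients inherit submultiplicativity.**
If `β : ℕ → [0,1]` is nonincreasing and submultiplicative with constant `C_{β,sub}`,
then the lagged sequence `β̃ k := β ((k - r) ⊔ 0)` (truncated subtraction in `ℕ`)
is submultiplicative with the same constant. -/
theorem lagged_beta_submultiplicative
    (β : ℕ → ℝ) (hβ_anti : Antitone β) (hβ_mem : ∀ k, β k ∈ Set.Icc (0 : ℝ) 1)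
    (Csub : ℝ) (hCsub : 0 < Csub)
    (hsub : ∀ q₁ q₂ : ℕ, β (q₁ * q₂) ≤ Csub * (β q₁ * β q₂))
    (r : ℕ) :
    ∀ q₁ q₂ : ℕ, β (q₁ * q₂ - r) ≤ Csub * (β (q₁ - r) * β (q₂ - r)) := by
  intro q₁ q₂
  have key : (q₁ - r) * (q₂ - r) ≤ q₁ * q₂ - r := by
    -- If some `qᵢ ≤ r`, the left side is `0`.
    rcases le_total q₁ r with h₁ | h₁
    · simp [Nat.sub_eq_zero_of_le h₁]
    rcases le_total q₂ r with h₂ | h₂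
    · simp [Nat.sub_eq_zero_of_le h₂]
    -- Otherwise `q₁ = r + a`, `q₂ = r + b`, and `r ≤ r²` gives `a b + r ≤ (r + a) (r + b)`.
    obtain ⟨a, rfl⟩ := Nat.exists_eq_add_of_le h₁
    obtain ⟨b, rfl⟩ := Nat.exists_eq_add_of_le h₂
    rw [Nat.add_sub_cancel_left, Nat.add_sub_cancel_left]
    apply Nat.le_sub_of_add_le
    nlinarith [Nat.le_mul_self r, Nat.zero_le (r * a), Nat.zero_le (r * b)]
  exact (hβ_anti key).trans (hsub _ _)
end
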